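/- Let A be an artin algebra. Assume every simple module S is a submodule of a finitely generated module M_S of finite projective dimension and also a factor module of a finitely generated module N_S of finite injective dimension. Let d = max over simple S of pd M_S and d' = max over simple S of id N_S. Then fin-pro A = fin-inj A = Fin-pro A = Fin-inj A = del A = des A = d = d'. -/

import Mathlib

open CategoryTheory CategoryTheory.Limits

noncomputable section

namespace ArtinAlg

variable (A : Type) [Ring A]

/-- `M` admits a projective resolution of length at most `n`. -/
inductive ProjDimLE : ℕ → ModuleCat.{0} A → Prop
  | zero (M : ModuleCat.{0} A) (h : Projective M) : ProjDimLE 0 M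
  | succ (n : ℕ) (M P : ModuleCat.{0} A) (f : P ⟶ M) (hP : Projective P) (hf : Epi f)
      (h : ProjDimLE n (kernel f)) : ProjDimLE (n + 1) M

/-- `M` admits an injective coresolution of length at most `n`. -/
inductive InjDimLE : ℕ → ModuleCat.{0} A → Prop
  | zero (M : ModuleCat.{0} A) (h : Injective M) : InjDimLE 0 M
  | succ (n : ℕ) (M I : ModuleCat.{0} A) (f : M ⟶ I) (hI : Injective I) (hf : Mono f)
      (h : InjDimLE n (cokernel f)) : InjDimLE (n + 1) M

/-- The projective dimension `pd M ∈ ℕ∞`. -/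
def projDim (M : ModuleCat.{0} A) : ℕ∞ :=
  sInf {d : ℕ∞ | ∃ n : ℕ, d = n ∧ ProjDimLE A n M}

/-- The injective dimension `id M ∈ ℕ∞`. -/
def injDim (M : ModuleCat.{0} A) : ℕ∞ :=
  sInf {d : ℕ∞ | ∃ n : ℕ, d = n ∧ InjDimLE A n M}

/-- `f : P ⟶ M` is a projective cover: `P` is projective and `f` is an essential
(superfluous) epimorphism. -/
def IsProjectiveCoverHom {P M : ModuleCat.{0} A} (f : P ⟶ M) : Prop :=
  Projective P ∧ Epi f ∧ ∀ (N : ModuleCat.{0} A) (g : N ⟶ P), Epi (g ≫ f) → Epi g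

/-- `P` is a projective cover of `M`. -/
def IsProjCoverOf (M P : ModuleCat.{0} A) : Prop :=
  ∃ f : P ⟶ M, IsProjectiveCoverHom A f

/-- `f : M ⟶ I` is an injective envelope: `I` is injective and `f` is an essential
monomorphism. -/
def IsInjectiveEnvelopeHom {M I : ModuleCat.{0} A} (f : M ⟶ I) : Prop :=
  Injective I ∧ Mono f ∧ ∀ (N : ModuleCat.{0} A) (g : I ⟶ N), Mono (f ≫ g) → Mono g

/-- `I` is an injective envelope of `M`. -/
def IsInjEnvOf (M I : ModuleCat.{0} A) : Prop :=
  ∃ f : M ⟶ I, IsInjectiveEnvelopeHom A f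

/-- `X ≅ Ω M`, the kernel of a projective cover of `M`. -/
def IsSyzygyOf (M X : ModuleCat.{0} A) : Prop :=
  ∃ (P : ModuleCat.{0} A) (f : P ⟶ M), IsProjectiveCoverHom A f ∧ Nonempty (X ≅ kernel f)

/-- `X ≅ Σ M`, the cokernel of an injective envelope of `M`. -/
def IsCosyzygyOf (M X : ModuleCat.{0} A) : Prop :=
  ∃ (I : ModuleCat.{0} A) (f : M ⟶ I), IsInjectiveEnvelopeHom A f ∧ Nonempty (X ≅ cokernel f)

/-- `X ≅ Ω^n M`. -/
def IsNthSyzygy : ℕ → ModuleCat.{0} A → ModuleCat.{0} A → Prop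
  | 0, M, X => Nonempty (X ≅ M)
  | n + 1, M, X => ∃ Y, IsSyzygyOf A M Y ∧ IsNthSyzygy n Y X

/-- `X ≅ Σ^n M`. -/
def IsNthCosyzygy : ℕ → ModuleCat.{0} A → ModuleCat.{0} A → Prop
  | 0, M, X => Nonempty (X ≅ M)
  | n + 1, M, X => ∃ Y, IsCosyzygyOf A M Y ∧ IsNthCosyzygy n Y X

/-- `X` is a direct summand of `Y`. -/
def IsDirectSummandOf (X Y : ModuleCat.{0} A) : Prop :=
  ∃ (i : X ⟶ Y) (r : Y ⟶ X), i ≫ r = 𝟙 X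

/-- `X ∈ add W` : `X` is a direct summand of a finite direct sum of copies of `W`. -/
def InAdd (X W : ModuleCat.{0} A) : Prop :=
  ∃ n : ℕ, IsDirectSummandOf A X (ModuleCat.of A (Fin n → ↥W))

/-- The delooping level of `M` is at most `d` :
`Ω^d M ∈ add (A ⊕ Ω^{d+1} M')` for some finitely generated `M'`. -/
def DelLE (d : ℕ) (M : ModuleCat.{0} A) : Prop :=
  ∃ X, IsNthSyzygy A d M X ∧
    ∃ M' : ModuleCat.{0} A, Module.Finite A ↥M' ∧
      ∃ X', IsNthSyzygy A (d + 1) M' X' ∧ InAdd A X (ModuleCat.of A (A × ↥X'))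

/-- The delooping level `del M ∈ ℕ∞`. -/
def delLevel (M : ModuleCat.{0} A) : ℕ∞ :=
  sInf {d : ℕ∞ | ∃ n : ℕ, d = n ∧ DelLE A n M}

/-- The delooping level of the algebra: the supremum of `del S` over the simple modules. -/
def delAlg : ℕ∞ :=
  sSup {d : ℕ∞ | ∃ S : ModuleCat.{0} A, IsSimpleModule A ↥S ∧ delLevel A S = d}

/-- `Q` is a minimal injective cogenerator: the injective envelope of the direct sum of
a complete set of representatives of the simple modules. -/
def IsMinimalInjectiveCogenerator (Q : ModuleCat.{0} A) : Prop :=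
  ∃ (ι : Type) (_ : Fintype ι) (S : ι → ModuleCat.{0} A),
    (∀ i, IsSimpleModule A ↥(S i)) ∧
    (∀ T : ModuleCat.{0} A, IsSimpleModule A ↥T → ∃! i, Nonempty (↥T ≃ₗ[A] ↥(S i))) ∧
    IsInjEnvOf A (ModuleCat.of A (∀ i, ↥(S i))) Q

/-- The desuspending level of `M` is at most `d` :
`Σ^d M ∈ add (D(A) ⊕ Σ^{d+1} M')` for some finitely generated `M'`. -/
def DesLE (d : ℕ) (M : ModuleCat.{0} A) : Prop :=
  ∃ X, IsNthCosyzygy A d M X ∧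
    ∃ Q, IsMinimalInjectiveCogenerator A Q ∧
      ∃ M' : ModuleCat.{0} A, Module.Finite A ↥M' ∧
        ∃ X', IsNthCosyzygy A (d + 1) M' X' ∧ InAdd A X (ModuleCat.of A (↥Q × ↥X'))

/-- The desuspending level `des M ∈ ℕ∞`. -/
def desLevel (M : ModuleCat.{0} A) : ℕ∞ :=
  sInf {d : ℕ∞ | ∃ n : ℕ, d = n ∧ DesLE A n M}

/-- The desuspending level of the algebra. -/
def desAlg : ℕ∞ :=
  sSup {d : ℕ∞ | ∃ S : ModuleCat.{0} A, IsSimpleModule A ↥S ∧ desLevel A S = d}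

/-- The (small) finitistic projective dimension `fin-pro A`. -/
def finProDim : ℕ∞ :=
  sSup {d : ℕ∞ | ∃ M : ModuleCat.{0} A, Module.Finite A ↥M ∧ projDim A M = d ∧ d ≠ ⊤}

/-- The (small) finitistic injective dimension `fin-inj A`. -/
def finInjDim : ℕ∞ :=
  sSup {d : ℕ∞ | ∃ M : ModuleCat.{0} A, Module.Finite A ↥M ∧ injDim A M = d ∧ d ≠ ⊤}

/-- The big finitistic projective dimension `Fin-pro A`. -/
def bigFinProDim : ℕ∞ :=
  sSup {d : ℕ∞ | ∃ M : ModuleCat.{0} A, projDim A M = d ∧ d ≠ ⊤}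

/-- The big finitistic injective dimension `Fin-inj A`. -/
def bigFinInjDim : ℕ∞ :=
  sSup {d : ℕ∞ | ∃ M : ModuleCat.{0} A, injDim A M = d ∧ d ≠ ⊤}

/-- `M` is an indecomposable nonzero module. -/
def Indec (M : ModuleCat.{0} A) : Prop :=
  Nontrivial ↥M ∧ ∀ (N₁ N₂ : Submodule A ↥M), IsCompl N₁ N₂ → N₁ = ⊥ ∨ N₂ = ⊥

/-- `M` is serial (uniserial): its submodules form a chain. -/
def IsUniserial (M : ModuleCat.{0} A) : Prop :=
  ∀ N₁ N₂ : Submodule A ↥M, N₁ ≤ N₂ ∨ N₂ ≤ N₁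

/-- `A` is a Nakayama algebra: all finitely generated indecomposable modules are serial. -/
def IsNakayama : Prop :=
  ∀ M : ModuleCat.{0} A, Module.Finite A ↥M → Indec A M → IsUniserial A M

/-- `A` is connected: it is not a nontrivial product of algebras. -/
def IsConnectedAlgebra : Prop :=
  Nontrivial A ∧ ∀ e : A, IsIdempotentElem e → e ∈ Set.center A → e = 0 ∨ e = 1

/-- `A` is a cyclic Nakayama algebra: connected Nakayama with no simple projective module. -/
def IsCyclicNakayama : Prop :=
  IsNakayama A ∧ IsConnectedAlgebra A ∧
    ¬ ∃ S : ModuleCat.{0} A, IsSimpleModule A ↥S ∧ Projective S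

/-- `T ≅ top M` (and `top M` is simple): there is an essential epimorphism `M ⟶ T`. -/
def IsSimpleTopOf (M T : ModuleCat.{0} A) : Prop :=
  IsSimpleModule A ↥T ∧
    ∃ f : M ⟶ T, Epi f ∧ ∀ (N : ModuleCat.{0} A) (g : N ⟶ M), Epi (g ≫ f) → Epi g

/-- `S ≅ soc M` (and `soc M` is simple): there is an essential monomorphism `S ⟶ M`. -/
def IsSimpleSocOf (M S : ModuleCat.{0} A) : Prop :=
  IsSimpleModule A ↥S ∧
    ∃ f : S ⟶ M, Mono f ∧ ∀ (N : ModuleCat.{0} A) (g : M ⟶ N), Mono (f ≫ g) → Mono g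

/-- `0 ⟶ N ⟶ E ⟶ M ⟶ 0` is an almost split (Auslander-Reiten) sequence. -/
def IsAlmostSplitSeq {N E M : ModuleCat.{0} A} (f : N ⟶ E) (g : E ⟶ M) : Prop :=
  Mono f ∧ Epi g ∧ (∃ w : f ≫ g = 0, (ShortComplex.mk f g w).Exact) ∧
  (¬ ∃ s : M ⟶ E, s ≫ g = 𝟙 M) ∧ Indec A N ∧ Indec A M ∧
  ∀ (X : ModuleCat.{0} A) (h : X ⟶ M), (¬ ∃ s : M ⟶ X, s ≫ h = 𝟙 M) → ∃ h' : X ⟶ E, h' ≫ g = h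

/-- `N ≅ τ M`, the Auslander-Reiten translate of `M` : there is an almost split sequence
`0 ⟶ N ⟶ E ⟶ M ⟶ 0`. -/
def IsTauOf (N M : ModuleCat.{0} A) : Prop :=
  ∃ (E : ModuleCat.{0} A) (f : N ⟶ E) (g : E ⟶ M), IsAlmostSplitSeq A f g

/-- `U ≅ ψ S = τ⁻ top (I S)`. -/
def IsPsiOf (S U : ModuleCat.{0} A) : Prop :=
  ∃ I, IsInjEnvOf A S I ∧ ∃ T, IsSimpleTopOf A I T ∧ IsTauOf A T U

/-- `T ≅ γ S = τ soc (P S)`. -/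
def IsGammaOf (S T : ModuleCat.{0} A) : Prop :=
  ∃ P, IsProjCoverOf A S P ∧ ∃ U, IsSimpleSocOf A P U ∧ IsTauOf A T U

/-- `T ≅ φ S = top (I S)`. -/
def IsPhiOf (S T : ModuleCat.{0} A) : Prop :=
  ∃ I, IsInjEnvOf A S I ∧ IsSimpleTopOf A I T

/-- There is a `ψ`-path `(S_1, …, S_m)` of cardinality `m` ending in `S`. -/
def PsiPathTo (m : ℕ) (S : ModuleCat.{0} A) : Prop :=
  1 ≤ m ∧ ∃ c : ℕ → ModuleCat.{0} A,
    (∀ i < m, IsSimpleModule A ↥(c i)) ∧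
    (∀ i, i + 1 < m → IsPsiOf A (c i) (c (i + 1))) ∧
    Nonempty (c (m - 1) ≅ S)

/-- `a(S)`: the supremum of the cardinalities of `ψ`-paths ending in `S`. -/
def aVal (S : ModuleCat.{0} A) : ℕ∞ :=
  sSup {d : ℕ∞ | ∃ m : ℕ, d = m ∧ PsiPathTo A m S}

/-- `a(A)`: the maximum of `a(S)` over the simple modules which are not `ψ`-cyclic. -/
def aAlg : ℕ∞ :=
  sSup {d : ℕ∞ | ∃ S : ModuleCat.{0} A, IsSimpleModule A ↥S ∧ aVal A S ≠ ⊤ ∧ aVal A S = d}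

/-- `S` is a composition factor of `M`: a simple subquotient of `M`. -/
def IsCompFactorOf (S M : ModuleCat.{0} A) : Prop :=
  IsSimpleModule A ↥S ∧ ∃ N' N : Submodule A ↥M, N' ≤ N ∧
    Nonempty ((↥N ⧸ N'.comap N.subtype) ≃ₗ[A] ↥S)

/-- `e(S) = min {pd S, pd (I S)} = x`. -/
def ERelVal (S : ModuleCat.{0} A) (x : ℕ∞) : Prop :=
  ∃ I, IsInjEnvOf A S I ∧ x = min (projDim A S) (projDim A I)

/-- `e*(S) = min {id S, id (P S)} = x`. -/
def EStarVal (S : ModuleCat.{0} A) (x : ℕ∞) : Prop :=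
  ∃ P, IsProjCoverOf A S P ∧ x = min (injDim A S) (injDim A P)

/-- `T = h(S) = top (Ω^{e(S)} N S)`, the homological permutation. -/
def HRel (S T : ModuleCat.{0} A) : Prop :=
  IsSimpleModule A ↥S ∧ IsSimpleModule A ↥T ∧
  ∃ z : ℕ, ERelVal A S z ∧
    ∃ N, ((Odd z ∧ N = S) ∨ (Even z ∧ IsInjEnvOf A S N)) ∧
      ∃ X, IsNthSyzygy A z N X ∧ IsSimpleTopOf A X T

/-- `S = h*(T) = soc (Σ^{e*(T)} N* T)`, the inverse homological permutation. -/
def HStarRel (T S : ModuleCat.{0} A) : Prop :=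
  IsSimpleModule A ↥T ∧ IsSimpleModule A ↥S ∧
  ∃ z : ℕ, EStarVal A T z ∧
    ∃ N, ((Odd z ∧ N = T) ∨ (Even z ∧ IsProjCoverOf A T N)) ∧
      ∃ X, IsNthCosyzygy A z N X ∧ IsSimpleSocOf A X S

/-- The `t`-fold relational iterate of a relation on modules (up to isomorphism). -/
def IterRel (r : ModuleCat.{0} A → ModuleCat.{0} A → Prop) :
    ℕ → ModuleCat.{0} A → ModuleCat.{0} A → Prop
  | 0, X, Y => Nonempty (X ≅ Y)
  | n + 1, X, Y => ∃ Z, r X Z ∧ IterRel r n Z Y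

end ArtinAlg

/-!
Simple modules detect homological dimensions: over an artin algebra a module `N` is injective as
soon as `Ext¹(S, N) = 0` for all simple `S` (Baer's criterion, filtering `A / I` by simples), and
projective as soon as `Ext¹(N, S) = 0` for all simple `S`; the latter holds even for infinitely
generated `N` because the radical filtration of any module is finite with semisimple layers, and a
semisimple module is a summand of a product of simples. So if `id N = n + 1`, then
`Extⁿ⁺¹(S, N) ≠ 0` for some simple `S`. As `Extⁿ⁺²(-, N) = 0`, the functor `Extⁿ⁺¹(-, N)` is
right exact, and an embedding `S ⊆ M_S` gives `Extⁿ⁺¹(M_S, N) ≠ 0`, whence `n + 1 ≤ pd M_S ≤ d`.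
Dually `Fin-pro A ≤ d'`, and the circle
`d ≤ fin-pro A ≤ Fin-pro A ≤ d' ≤ fin-inj A ≤ Fin-inj A ≤ d` closes.

The levels fit in between. If `Ωᵐ S ∈ add (A ⊕ Ωᵐ⁺¹ M')` with `m ≤ n` and `id N ≤ n + 1`, then
dimension shifting embeds `Extⁿ⁺¹(S, N)` in a power of `Extⁿ⁺²(M', N) = 0`; hence
`Fin-inj A ≤ del A`. Conversely, let `S ⊆ M` with `pd M ≤ m` and `Q = M / S`. Passing to syzygies
`m` times by the horseshoe construction makes the middle term of `0 → S → M → Q → 0` projective,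
and Schanuel's lemma then exhibits `Ωᵐ S` as a summand of `P ⊕ Ωᵐ⁺¹ Q` with `P` projective; hence
`del A ≤ d`. Dually `Fin-pro A ≤ des A ≤ d'`.
-/

namespace ArtinAlg

open Abelian

universe u v w

section ExtVanishing

variable {C : Type u} [Category.{v} C] [Abelian C] [HasExt.{w} C]

lemma subsingleton_ext_of_sum_comp_eq_id_left {ι : Type*} [Fintype ι] {X : C} {W : ι → C}
    (a : ∀ i, X ⟶ W i) (b : ∀ i, W i ⟶ X) (hab : ∑ i, a i ≫ b i = 𝟙 X) (Y : C) (n : ℕ)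
    (hW : ∀ i, Subsingleton (Ext (W i) Y n)) : Subsingleton (Ext X Y n) := by
  refine subsingleton_of_forall_eq 0 fun e => ?_
  have hb (i : ι) : (Ext.mk₀ (b i)).comp e (zero_add n) = 0 := Subsingleton.elim _ _
  rw [← Ext.mk₀_id_comp e, ← hab, Ext.mk₀_sum, Ext.sum_comp]
  simp [← Ext.mk₀_comp_mk₀_assoc, hb]

lemma subsingleton_ext_of_sum_comp_eq_id_right {ι : Type*} [Fintype ι] {Y : C} {W : ι → C}
    (a : ∀ i, Y ⟶ W i) (b : ∀ i, W i ⟶ Y) (hab : ∑ i, a i ≫ b i = 𝟙 Y) (X : C) (n : ℕ)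
    (hW : ∀ i, Subsingleton (Ext X (W i) n)) : Subsingleton (Ext X Y n) := by
  refine subsingleton_of_forall_eq 0 fun e => ?_
  have ha (i : ι) : e.comp (Ext.mk₀ (a i)) (add_zero n) = 0 := Subsingleton.elim _ _
  rw [← Ext.comp_mk₀_id e, ← hab, Ext.mk₀_sum, Ext.comp_sum]
  simp [← Ext.mk₀_comp_mk₀, ← Ext.comp_assoc_of_second_deg_zero, ha]

variable {S : ShortComplex C} (hS : S.ShortExact)
include hS

lemma subsingleton_ext_X₁_left (Y : C) (n : ℕ) (h₂ : Subsingleton (Ext S.X₂ Y n))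
    (h₃ : Subsingleton (Ext S.X₃ Y (n + 1))) : Subsingleton (Ext S.X₁ Y n) := by
  refine subsingleton_of_forall_eq 0 fun e => ?_
  obtain ⟨e₂, rfl⟩ := Ext.contravariant_sequence_exact₁ hS Y e (add_comm 1 n)
    (Subsingleton.elim _ _)
  rw [Subsingleton.elim e₂ 0, Ext.comp_zero]

lemma subsingleton_ext_X₂_left (Y : C) (n : ℕ) (h₁ : Subsingleton (Ext S.X₁ Y n))
    (h₃ : Subsingleton (Ext S.X₃ Y n)) : Subsingleton (Ext S.X₂ Y n) := by
  refine subsingleton_of_forall_eq 0 fun e => ?_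
  obtain ⟨e₃, rfl⟩ := Ext.contravariant_sequence_exact₂ hS Y e (Subsingleton.elim _ _)
  rw [Subsingleton.elim e₃ 0, Ext.comp_zero]

lemma subsingleton_ext_X₃_left (Y : C) (n : ℕ) (h₁ : Subsingleton (Ext S.X₁ Y n))
    (h₂ : Subsingleton (Ext S.X₂ Y (n + 1))) : Subsingleton (Ext S.X₃ Y (n + 1)) := by
  refine subsingleton_of_forall_eq 0 fun e => ?_
  obtain ⟨e₁, rfl⟩ := Ext.contravariant_sequence_exact₃ hS Y e (Subsingleton.elim _ _)
    (add_comm 1 n)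
  rw [Subsingleton.elim e₁ 0, Ext.comp_zero]

lemma subsingleton_ext_X₁_right (X : C) (n : ℕ) (h₂ : Subsingleton (Ext X S.X₂ (n + 1)))
    (h₃ : Subsingleton (Ext X S.X₃ n)) : Subsingleton (Ext X S.X₁ (n + 1)) := by
  refine subsingleton_of_forall_eq 0 fun e => ?_
  obtain ⟨e₃, rfl⟩ := Ext.covariant_sequence_exact₁ X hS e (Subsingleton.elim _ _) rfl
  rw [Subsingleton.elim e₃ 0, Ext.zero_comp]

lemma subsingleton_ext_X₂_right (X : C) (n : ℕ) (h₁ : Subsingleton (Ext X S.X₁ n))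
    (h₃ : Subsingleton (Ext X S.X₃ n)) : Subsingleton (Ext X S.X₂ n) := by
  refine subsingleton_of_forall_eq 0 fun e => ?_
  obtain ⟨e₁, rfl⟩ := Ext.covariant_sequence_exact₂ X hS e (Subsingleton.elim _ _)
  rw [Subsingleton.elim e₁ 0, Ext.zero_comp]

lemma subsingleton_ext_X₃_right (X : C) (n : ℕ) (h₁ : Subsingleton (Ext X S.X₁ (n + 1)))
    (h₂ : Subsingleton (Ext X S.X₂ n)) : Subsingleton (Ext X S.X₃ n) := by
  refine subsingleton_of_forall_eq 0 fun e => ?_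
  obtain ⟨e₂, rfl⟩ := Ext.covariant_sequence_exact₃ X hS e rfl (Subsingleton.elim _ _)
  rw [Subsingleton.elim e₂ 0, Ext.zero_comp]

lemma subsingleton_ext_X₁_left_iff [Projective S.X₂] (Y : C) (n : ℕ) :
    Subsingleton (Ext S.X₁ Y (n + 1)) ↔ Subsingleton (Ext S.X₃ Y (n + 2)) :=
  ⟨fun h => subsingleton_ext_X₃_left hS Y (n + 1) h
      (Ext.subsingleton_of_projective S.X₂ Y (n + 1)),
    fun h => subsingleton_ext_X₁_left hS Y (n + 1) (Ext.subsingleton_of_projective S.X₂ Y n) h⟩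

lemma subsingleton_ext_X₃_right_iff [Injective S.X₂] (X : C) (n : ℕ) :
    Subsingleton (Ext X S.X₃ (n + 1)) ↔ Subsingleton (Ext X S.X₁ (n + 2)) :=
  ⟨fun h => subsingleton_ext_X₁_right hS X (n + 1)
      (Ext.subsingleton_of_injective X S.X₂ (n + 1)) h,
    fun h => subsingleton_ext_X₃_right hS X (n + 1) h (Ext.subsingleton_of_injective X S.X₂ n)⟩

lemma subsingleton_ext_one_iff_exists_comp_eq [Projective S.X₂] (Y : C) :
    Subsingleton (Ext S.X₃ Y 1) ↔ ∀ g : S.X₁ ⟶ Y, ∃ g' : S.X₂ ⟶ Y, S.f ≫ g' = g := by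
  constructor
  · intro _ g
    obtain ⟨e, he⟩ := Ext.contravariant_sequence_exact₁ hS Y (Ext.mk₀ g) (add_zero 1)
      (Subsingleton.elim _ _)
    obtain ⟨g', rfl⟩ := (Ext.mk₀_bijective S.X₂ Y).2 e
    rw [Ext.mk₀_comp_mk₀] at he
    exact ⟨g', (Ext.mk₀_bijective S.X₁ Y).1 he⟩
  · intro h
    refine subsingleton_of_forall_eq 0 fun e => ?_
    obtain ⟨e₁, rfl⟩ := Ext.contravariant_sequence_exact₃ hS Y e (Ext.eq_zero_of_projective _)
      (add_zero 1)
    obtain ⟨g, rfl⟩ := (Ext.mk₀_bijective S.X₁ Y).2 e₁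
    obtain ⟨g', rfl⟩ := h g
    rw [← Ext.mk₀_comp_mk₀, hS.extClass_comp_assoc]

end ExtVanishing

section Testing

variable {C : Type u} [Category.{v} C] [Abelian C]

lemma shortExact_kernel {X Y : C} (f : X ⟶ Y) [Epi f] :
    (ShortComplex.mk _ _ (kernel.condition f)).ShortExact where
  exact := ShortComplex.exact_kernel f

lemma shortExact_cokernel {X Y : C} (f : X ⟶ Y) [Mono f] :
    (ShortComplex.mk _ _ (cokernel.condition f)).ShortExact where
  exact := ShortComplex.exact_cokernel f

variable [HasExt.{w} C]

theorem subsingleton_ext_of_mono {S M N : C} (i : S ⟶ M) [Mono i] {n : ℕ}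
    (hM : HasProjectiveDimensionLE M n) (hN : HasInjectiveDimensionLE N (n + 1)) :
    Subsingleton (Ext S N (n + 1)) :=
  subsingleton_ext_X₁_left (shortExact_cokernel i) N (n + 1)
    (hM.subsingleton _ _ (n + 1) le_rfl N) (hN.subsingleton _ _ (n + 2) le_rfl _)

theorem subsingleton_ext_of_epi {S M N : C} (p : M ⟶ S) [Epi p] {n : ℕ}
    (hM : HasInjectiveDimensionLE M n) (hN : HasProjectiveDimensionLE N (n + 1)) :
    Subsingleton (Ext N S (n + 1)) :=
  subsingleton_ext_X₃_right (shortExact_kernel p) N (n + 1)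
    (hN.subsingleton _ _ (n + 2) le_rfl _) (hM.subsingleton _ _ (n + 1) le_rfl N)

variable (T : ObjectProperty C)

lemma hasProjectiveDimensionLE_of_subsingleton_ext [EnoughProjectives C]
    (hT : ∀ X, (∀ Y, T Y → Subsingleton (Ext X Y 1)) → Projective X) (n : ℕ) (X : C)
    (hX : ∀ Y, T Y → Subsingleton (Ext X Y (n + 1))) : HasProjectiveDimensionLE X n := by
  induction n generalizing X with
  | zero => exact projective_iff_hasProjectiveDimensionLT_one.1 (hT X hX)
  | succ n ih =>
    have hS := shortExact_kernel (Projective.π X)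
    refine (hS.hasProjectiveDimensionLT_X₃_iff n inferInstance).2 (ih _ fun Y hY => ?_)
    exact (subsingleton_ext_X₁_left_iff hS Y n).2 (hX Y hY)

lemma hasInjectiveDimensionLE_of_subsingleton_ext [EnoughInjectives C]
    (hT : ∀ Y, (∀ X, T X → Subsingleton (Ext X Y 1)) → Injective Y) (n : ℕ) (Y : C)
    (hY : ∀ X, T X → Subsingleton (Ext X Y (n + 1))) : HasInjectiveDimensionLE Y n := by
  induction n generalizing Y with
  | zero => exact injective_iff_hasInjectiveDimensionLT_one.1 (hT Y hY)
  | succ n ih =>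
    have hS := shortExact_cokernel (Injective.ι Y)
    refine (hS.hasInjectiveDimensionLT_X₃_iff n inferInstance).1 (ih _ fun X hX => ?_)
    exact (subsingleton_ext_X₃_right_iff hS X n).2 (hY X hX)

end Testing

section TestingOnSimples

variable {A : Type u} [Ring A]

lemma shortExact_submodule {M : Type u} [AddCommGroup M] [Module A M] (N : Submodule A M) :
    (ModuleCat.shortComplexOfCompEqZero N.subtype N.mkQ
      (LinearMap.exact_subtype_mkQ N).linearMap_comp_eq_zero).ShortExact :=
  ModuleCat.shortComplex_shortExact _ (LinearMap.exact_subtype_mkQ N) N.injective_subtype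
    N.mkQ_surjective

lemma subsingleton_ext_of_isFiniteLength (N : ModuleCat.{u} A) (n : ℕ)
    (hN : ∀ S : ModuleCat.{u} A, IsSimpleModule A S → Subsingleton (Ext S N n))
    {M : Type u} [AddCommGroup M] [Module A M] (hM : IsFiniteLength A M) :
    Subsingleton (Ext (ModuleCat.of A M) N n) := by
  induction hM with
  | @of_subsingleton M _ _ _ =>
    have hM := (ModuleCat.isZero_of_subsingleton (ModuleCat.of A M)).hasProjectiveDimensionLT_zero
    exact HasProjectiveDimensionLT.subsingleton _ 0 n n.zero_le N
  | @of_simple_quotient M _ _ S hS _ ih =>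
    exact subsingleton_ext_X₂_left (shortExact_submodule S) N n ih
      (hN (ModuleCat.of A (M ⧸ S)) hS)

theorem injective_of_subsingleton_ext_quotient (N : ModuleCat.{u} A)
    (hN : ∀ I : Ideal A, Subsingleton (Ext (ModuleCat.of A (A ⧸ I)) N 1)) : Injective N := by
  have : Projective (ModuleCat.of A A) :=
    (IsProjective.iff_projective (R := A) A).1 inferInstance
  have baer : Module.Baer A N := fun I g => by
    obtain ⟨g', hg'⟩ := (subsingleton_ext_one_iff_exists_comp_eq (shortExact_submodule I) N).1
      (hN I) (ModuleCat.ofHom g)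
    exact ⟨g'.hom, fun x hx => congr($hg' ⟨x, hx⟩)⟩
  have := baer.injective
  exact Module.injective_object_of_injective_module A N

lemma injective_of_subsingleton_ext_simple [IsArtinianRing A] (N : ModuleCat.{u} A)
    (hN : ∀ S : ModuleCat.{u} A, IsSimpleModule A S → Subsingleton (Ext S N 1)) :
    Injective N :=
  injective_of_subsingleton_ext_quotient N fun _ => subsingleton_ext_of_isFiniteLength N 1 hN
    (isFiniteLength_iff_isNoetherian_isArtinian.2 ⟨inferInstance, inferInstance⟩)

theorem isSemisimpleModule_pi [IsSemiprimaryRing A] {ι : Type*} (M : ι → Type*)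
    [∀ i, AddCommGroup (M i)] [∀ i, Module A (M i)] [∀ i, IsSemisimpleModule A (M i)] :
    IsSemisimpleModule A (∀ i, M i) := by
  have hJ : Module.IsTorsionBySet A (∀ i, M i) (Ring.jacobson A) := fun x a => funext fun i =>
    Module.mem_annihilator.1 (IsSemisimpleModule.jacobson_le_annihilator A (M i) a.2) (x i)
  let _ := hJ.module
  exact (hJ.semilinearMap.isSemisimpleModule_iff_of_bijective Function.bijective_id).2
    inferInstance

theorem exists_pi_simple_injective (Y : Type u) [AddCommGroup Y] [Module A Y]
    [IsSemisimpleModule A Y] : ∃ (ι : Type u) (S : ι → ModuleCat.{u} A)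
      (f : Y →ₗ[A] ∀ i, S i), (∀ i, IsSimpleModule A (S i)) ∧ Function.Injective f := by
  refine ⟨{N : Submodule A Y // IsCoatom N}, fun N => ModuleCat.of A (Y ⧸ N.1),
    LinearMap.pi fun N => N.1.mkQ, fun N => isSimpleModule_iff_isCoatom.2 N.2, ?_⟩
  rw [← LinearMap.ker_eq_bot, LinearMap.ker_pi]
  have := IsSemisimpleModule.jacobson_eq_bot A Y
  rw [Module.jacobson, sInf_eq_iInf'] at this
  exact (iInf_congr fun N => N.1.ker_mkQ).trans this

lemma subsingleton_ext_one_of_isSemisimpleModule [IsSemiprimaryRing A] (M : ModuleCat.{u} A)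
    (hM : ∀ S : ModuleCat.{u} A, IsSimpleModule A S → Subsingleton (Ext M S 1))
    (Y : Type u) [AddCommGroup Y] [Module A Y] [IsSemisimpleModule A Y] :
    Subsingleton (Ext M (ModuleCat.of A Y) 1) := by
  obtain ⟨ι, S, f, hS, hf⟩ := exists_pi_simple_injective (A := A) Y
  have (i : ι) : IsSemisimpleModule A (S i) := have := hS i; inferInstance
  have := isSemisimpleModule_pi (A := A) fun i => S i
  obtain ⟨r, hr⟩ := IsSemisimpleModule.extension_property f hf LinearMap.id
  have hse := shortExact_kernel (Projective.π M)
  refine (subsingleton_ext_one_iff_exists_comp_eq hse _).2 fun g => ?_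
  choose g' hg' using fun i => (subsingleton_ext_one_iff_exists_comp_eq hse (S i)).1
    (hM (S i) (hS i)) (g ≫ ModuleCat.ofHom (LinearMap.proj i ∘ₗ f))
  refine ⟨ModuleCat.ofHom (r ∘ₗ LinearMap.pi fun i => (g' i).hom), ?_⟩
  ext k
  have hk : (fun i => (g' i).hom (kernel.ι (Projective.π M) k)) = f (g k) :=
    funext fun i => congr($(hg' i) k)
  exact (congrArg r hk).trans congr($hr (g k))

theorem projective_of_subsingleton_ext_simple [IsSemiprimaryRing A] (M : ModuleCat.{u} A)
    (hM : ∀ S : ModuleCat.{u} A, IsSimpleModule A S → Subsingleton (Ext M S 1)) :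
    Projective M := by
  rw [projective_iff_subsingleton_ext_one]
  intro Y
  exact IsSemiprimaryRing.induction A A Y
    (P := fun Y _ _ _ => Subsingleton (Ext M (ModuleCat.of A Y) 1))
    (fun Y _ _ _ _ _ _ => subsingleton_ext_one_of_isSemisimpleModule M hM Y)
    (fun Y _ _ _ _ => subsingleton_ext_X₂_right (shortExact_submodule _) M 1)

end TestingOnSimples

section Essential

variable {α : Type*} [CompleteLattice α]

/-- An element `a` of a lattice is essential if it meets every nonzero element; for the
lattice of submodules of `M` this says that `M` is an essential extension of `a`. -/
def IsEssential (a : α) : Prop :=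
  ∀ b, Disjoint b a → b = ⊥

theorem exists_le_maximal_disjoint [IsCompactlyGenerated α] {a c : α} (h : Disjoint a c) :
    ∃ b, a ≤ b ∧ Maximal (Disjoint · c) b :=
  zorn_le_nonempty₀ {b | Disjoint b c}
    (fun s hs hchain _ _ => ⟨sSup s, hchain.directedOn.disjoint_sSup_left.2 hs, fun _ => le_sSup⟩)
    a h

theorem eq_bot_of_le_of_disjoint_of_maximal_disjoint [IsModularLattice α] {a b c x : α}
    (hc : Maximal (Disjoint · a) c) (hab : a ≤ b) (hbc : Disjoint b c) (hxb : x ≤ b)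
    (hxa : Disjoint x a) : x = ⊥ := by
  have hcx : (x ⊔ c) ⊓ b = x := by
    rw [sup_inf_assoc_of_le c hxb, hbc.symm.eq_bot, sup_bot_eq]
  have hxc : x ≤ c := by
    refine le_sup_left.trans (hc.le_of_ge (y := x ⊔ c) ?_ le_sup_right)
    exact disjoint_iff_inf_le.2 ((le_inf (inf_le_inf_left _ hab) inf_le_right).trans
      (hcx.symm ▸ hxa.le_bot))
  exact (hbc.mono hxb hxc).eq_bot_of_self

end Essential

section InjectiveEnvelope

variable {A : Type*} [Ring A]

lemma disjoint_range_of_maximal_disjoint {J : Type*} [AddCommGroup J] [Module A J]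
    {L E C : Submodule A J} (hC : Maximal (Disjoint · L) C) (hLE : L ≤ E) (hEC : Disjoint E C)
    (φ : J →ₗ[A] J) (hφC : C ≤ LinearMap.ker φ) (hφE : ∀ x ∈ E, φ x = x) :
    Disjoint (LinearMap.range φ) C := by
  have hcomap : C.comap φ ≤ C := by
    refine hC.le_of_ge (Submodule.disjoint_def.2 fun x hxC hxL => ?_) fun x hx => ?_
    · rw [Submodule.mem_comap, hφE x (hLE hxL)] at hxC
      exact Submodule.disjoint_def.1 hEC x (hLE hxL) hxC
    · rw [Submodule.mem_comap, LinearMap.mem_ker.1 (hφC hx)]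
      exact C.zero_mem
  refine Submodule.disjoint_def.2 ?_
  rintro _ ⟨x, rfl⟩ hx
  exact hφC (hcomap hx)

theorem exists_isEssential_retraction {J : Type v} [AddCommGroup J] [Module A J]
    (hJ : Module.Injective A J) (L : Submodule A J) :
    ∃ E : Submodule A J, L ≤ E ∧ IsEssential (L.submoduleOf E) ∧
      ∃ r : J →ₗ[A] E, r ∘ₗ E.subtype = LinearMap.id := by
  obtain ⟨C, -, hC⟩ := exists_le_maximal_disjoint (disjoint_bot_left (a := L))
  obtain ⟨E, hLE, hE⟩ := exists_le_maximal_disjoint hC.prop.symm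
  have hEC : Function.Injective (C.mkQ ∘ₗ E.subtype) := by
    rw [← LinearMap.ker_eq_bot, LinearMap.ker_comp, C.ker_mkQ,
      ← Submodule.disjoint_iff_comap_eq_bot]
    exact hE.prop
  obtain ⟨h, hh⟩ := hJ.out _ hEC E.subtype
  have hr : LinearMap.range (h ∘ₗ C.mkQ) ≤ E :=
    hE.le_of_ge (disjoint_range_of_maximal_disjoint hC hLE hE.prop _
      (by simpa only [C.ker_mkQ] using LinearMap.ker_le_ker_comp C.mkQ h)
      fun x hx => hh ⟨x, hx⟩) fun x hx => ⟨x, hh ⟨x, hx⟩⟩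
  refine ⟨E, hLE, fun X hX => ?_, (h ∘ₗ C.mkQ).codRestrict E fun x => hr ⟨x, rfl⟩,
    LinearMap.ext fun x => Subtype.ext (hh x)⟩
  suffices X.map E.subtype = ⊥ from
    Submodule.map_injective_of_injective E.injective_subtype (this.trans (Submodule.map_bot _).symm)
  refine eq_bot_of_le_of_disjoint_of_maximal_disjoint hC hLE hE.prop (E.map_subtype_le X)
    (Submodule.disjoint_def.2 ?_)
  rintro _ ⟨x, hx, rfl⟩ hxL
  exact congrArg Subtype.val (Submodule.disjoint_def.1 hX x hx hxL)

end InjectiveEnvelope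

section InjectiveEnvelope

variable {A : Type} [Ring A]

lemma isInjectiveEnvelopeHom_of_isEssential {M I : ModuleCat.{0} A} [Injective I] (f : M ⟶ I)
    [Mono f] (hf : IsEssential (LinearMap.range f.hom)) : IsInjectiveEnvelopeHom A f := by
  refine ⟨inferInstance, inferInstance, fun N g hfg => ?_⟩
  rw [ModuleCat.mono_iff_ker_eq_bot] at hfg ⊢
  refine hf _ (Submodule.disjoint_def.2 ?_)
  rintro _ hx ⟨m, rfl⟩
  have hm : m ∈ LinearMap.ker (f ≫ g).hom := hx
  rw [hfg, Submodule.mem_bot] at hm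
  rw [hm, map_zero]

theorem exists_isInjectiveEnvelopeHom (M : ModuleCat.{0} A) :
    ∃ (I : ModuleCat.{0} A) (f : M ⟶ I), IsInjectiveEnvelopeHom A f ∧
      IsEssential (LinearMap.range f.hom) := by
  let J : ModuleCat.{0} A := Injective.under M
  have hJ : Module.Injective A J :=
    (Module.injective_iff_injective_object A J).2 (Injective.injective_under M)
  obtain ⟨E, hME, hE, r, hr⟩ :=
    exists_isEssential_retraction hJ (LinearMap.range (Injective.ι M).hom)
  let f : M →ₗ[A] E := (Injective.ι M).hom.codRestrict E fun m => hME ⟨m, rfl⟩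
  have hf : IsEssential (LinearMap.range f) := by
    rwa [LinearMap.range_codRestrict]
  have : Injective (ModuleCat.of A E) :=
    (Retract.mk (Y := J) (ModuleCat.ofHom E.subtype) (ModuleCat.ofHom r)
      (ModuleCat.hom_ext hr)).injective
  have : Mono (ModuleCat.ofHom f) := by
    refine (ModuleCat.mono_iff_injective _).2 fun x y hxy => ?_
    exact (ModuleCat.mono_iff_injective (Injective.ι M)).1 inferInstance (congrArg Subtype.val hxy)
  exact ⟨ModuleCat.of A E, ModuleCat.ofHom f, isInjectiveEnvelopeHom_of_isEssential _ hf, hf⟩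

end InjectiveEnvelope

section FiniteEssentialExtension

variable (R : Type*) [CommRing R] {A : Type*} [Ring A] [Algebra R A]
  {E : Type*} [AddCommGroup E] [Module R E] [Module A E] [IsScalarTower R A E]

lemma IsEssential.range_le {L : Submodule A E} (hL : IsEssential L) {S : Type*} [AddCommGroup S]
    [Module A S] [IsSimpleModule A S] (φ : S →ₗ[A] E) : LinearMap.range φ ≤ L := by
  rcases eq_bot_or_eq_top (L.comap φ) with h | h
  · refine (hL (LinearMap.range φ) (Submodule.disjoint_def.2 ?_)).le.trans bot_le
    rintro _ ⟨x, rfl⟩ hx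
    have hx0 : x ∈ L.comap φ := hx
    rw [h, Submodule.mem_bot] at hx0
    rw [hx0, map_zero]
  · rw [LinearMap.range_eq_map, Submodule.map_le_iff_le_comap, h]

lemma isNoetherian_linearMap_of_isSimpleModule {L : Submodule A E} (hL : IsEssential L)
    [IsNoetherian R L] (S : Type*) [AddCommGroup S] [Module A S] [IsSimpleModule A S] :
    IsNoetherian R (S →ₗ[A] E) := by
  have := IsSimpleModule.nontrivial A S
  obtain ⟨s, hs⟩ := exists_ne (0 : S)
  let evalAt : (S →ₗ[A] E) →ₗ[R] L :=
    { toFun := fun φ => ⟨φ s, hL.range_le φ ⟨s, rfl⟩⟩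
      map_add' := fun _ _ => rfl
      map_smul' := fun _ _ => rfl }
  refine isNoetherian_of_injective evalAt fun φ ψ h => ?_
  refine LinearMap.ext_on (IsSimpleModule.span_singleton_eq_top A hs) ?_
  rintro _ rfl
  exact congrArg Subtype.val h

lemma isNoetherian_linearMap_of_isFiniteLength {L : Submodule A E} (hL : IsEssential L)
    [IsNoetherian R L] {X : Type*} [AddCommGroup X] [Module A X] (hX : IsFiniteLength A X) :
    IsNoetherian R (X →ₗ[A] E) := by
  induction hX with
  | of_subsingleton => infer_instance
  | @of_simple_quotient X _ _ N _ _ ih =>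
    have := isNoetherian_linearMap_of_isSimpleModule R hL (X ⧸ N)
    refine isNoetherian_of_range_eq_ker (LinearMap.lcomp R E N.mkQ)
      (LinearMap.lcomp R E N.subtype) ?_
    ext φ
    constructor
    · rintro ⟨ψ, rfl⟩
      refine LinearMap.ext fun x => ?_
      change ψ (N.mkQ x) = 0
      rw [Submodule.mkQ_apply, (Submodule.Quotient.mk_eq_zero N).2 x.2, map_zero]
    · intro hφ
      have hN : N ≤ LinearMap.ker φ := fun x hx => congr($hφ ⟨x, hx⟩)
      exact ⟨N.liftQ φ hN, N.liftQ_mkQ φ hN⟩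

theorem finite_of_isEssential [IsArtinianRing A] {L : Submodule A E} (hL : IsEssential L)
    [IsNoetherian R L] : Module.Finite A E := by
  have : IsNoetherian R (A →ₗ[A] E) := isNoetherian_linearMap_of_isFiniteLength R hL
    (isFiniteLength_iff_isNoetherian_isArtinian.2 ⟨inferInstance, inferInstance⟩)
  have : Module.Finite R E := Module.Finite.equiv (LinearMap.ringLmapEquivSelf A R E)
  exact Module.Finite.of_restrictScalars_finite R A E

end FiniteEssentialExtension

section ProjectiveCover

lemma exists_projective_le_of_map_eq_top {A : Type*} [Ring A] {P M : Type*} [AddCommGroup P]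
    [Module A P] [AddCommGroup M] [Module A M] [Module.Projective A P] [IsNoetherian A P]
    [IsArtinian A P] (g : P →ₗ[A] M) (hg : Function.Surjective g) {N : Submodule A P}
    (hN : N.map g = ⊤) : ∃ Q ≤ N, Module.Projective A Q ∧ Q.map g = ⊤ := by
  have hgN : Function.Surjective (g ∘ₗ N.subtype) := by
    rw [← LinearMap.range_eq_top, LinearMap.range_comp, Submodule.range_subtype, hN]
  obtain ⟨l, hl⟩ := Module.projective_lifting_property (g ∘ₗ N.subtype) g hgN
  let h : Module.End A P := N.subtype ∘ₗ l
  have hpow : ∀ n, g ∘ₗ (h ^ n) = g := fun n => by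
    induction n with
    | zero => rfl
    | succ n ih => rw [pow_succ, Module.End.mul_eq_comp, ← LinearMap.comp_assoc, ih]; exact hl
  -- Fitting's lemma: a high power of `h` splits off its range.
  obtain ⟨n, hn⟩ := Filter.eventually_atTop.1 (LinearMap.eventually_isCompl_ker_pow_range_pow h)
  have hcompl := hn (n + 1) n.le_succ
  refine ⟨LinearMap.range (h ^ (n + 1)), ?_, ?_, ?_⟩
  · rintro _ ⟨x, rfl⟩
    rw [pow_succ', Module.End.mul_apply]
    exact (l _).2
  · exact Module.Projective.of_split (LinearMap.range (h ^ (n + 1))).subtype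
      (Submodule.projectionOnto _ _ hcompl.symm)
      (LinearMap.ext fun x => Submodule.projectionOnto_apply_left hcompl.symm x)
  · rw [← LinearMap.range_comp, hpow, LinearMap.range_eq_top.2 hg]

theorem exists_minimal_projective_map_eq_top {A : Type*} [Ring A] {F M : Type*}
    [AddCommGroup F] [Module A F] [AddCommGroup M] [Module A M] [Module.Projective A F]
    [IsNoetherian A F] [IsArtinian A F] (g : F →ₗ[A] M) (hg : Function.Surjective g) :
    ∃ P : Submodule A F, Module.Projective A P ∧ Minimal (fun N => N.map g = ⊤) P := by
  obtain ⟨P, ⟨hP, hgP⟩, hmin⟩ := (wellFounded_lt (α := Submodule A F)).has_min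
    {P | Module.Projective A P ∧ P.map g = ⊤}
    ⟨⊤, .of_equiv Submodule.topEquiv.symm, by rw [Submodule.map_top, LinearMap.range_eq_top.2 hg]⟩
  refine ⟨P, hP, hgP, fun N hN hNP => ?_⟩
  have map_domRestrict (K : Submodule A P) : K.map (g.domRestrict P) = (K.map P.subtype).map g :=
    Submodule.map_comp P.subtype g K
  obtain ⟨Q, hQN, hQ, hgQ⟩ := exists_projective_le_of_map_eq_top (g.domRestrict P)
    (by rw [← LinearMap.range_eq_top, LinearMap.range_domRestrict, hgP])
    (N := N.submoduleOf P) (by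
      rw [map_domRestrict, Submodule.submoduleOf, Submodule.map_comap_subtype,
        inf_eq_right.2 hNP, hN])
  have hQP : Q.map P.subtype = P := eq_of_le_of_not_lt (P.map_subtype_le Q) (hmin _
    ⟨.of_equiv (Submodule.equivMapOfInjective P.subtype P.injective_subtype Q),
      (map_domRestrict Q).symm.trans hgQ⟩)
  exact hQP.ge.trans (Submodule.map_le_iff_le_comap.2 hQN)

theorem exists_isProjectiveCoverHom {A : Type} [Ring A] [IsArtinianRing A] (M : ModuleCat.{0} A)
    [Module.Finite A M] :
    ∃ (P : ModuleCat.{0} A) (f : P ⟶ M), Module.Finite A P ∧ IsProjectiveCoverHom A f := by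
  obtain ⟨k, g, hg⟩ := Module.Finite.exists_fin' A M
  obtain ⟨P, hP, hgP, hmin⟩ := exists_minimal_projective_map_eq_top g hg
  refine ⟨ModuleCat.of A P, ModuleCat.ofHom (g.domRestrict P),
    inferInstanceAs (Module.Finite A P), inferInstance, ?_, fun N u hu => ?_⟩
  · rw [ModuleCat.epi_iff_range_eq_top, ModuleCat.hom_ofHom, LinearMap.range_domRestrict, hgP]
  · rw [ModuleCat.epi_iff_range_eq_top] at hu ⊢
    have hmap : ((LinearMap.range u.hom).map P.subtype).map g = ⊤ := by
      rw [← hu, ← LinearMap.range_comp, ← LinearMap.range_comp]; rfl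
    rw [eq_top_iff, ← Submodule.map_le_map_iff_of_injective P.injective_subtype,
      Submodule.map_top, Submodule.range_subtype]
    exact hmin hmap (P.map_subtype_le _)

end ProjectiveCover

section SimpleModules

variable {A : Type u} [Ring A] [IsArtinianRing A]

lemma exists_linearEquiv_submodule_quotient_jacobson (T : Type*) [AddCommGroup T] [Module A T]
    [IsSimpleModule A T] :
    ∃ S : Submodule A (A ⧸ Module.jacobson A A), Nonempty (T ≃ₗ[A] S) := by
  have : IsSemisimpleModule A (A ⧸ Module.jacobson A A) :=
    (IsArtinian.isSemisimpleModule_iff_jacobson A _).2 (Module.jacobson_quotient_jacobson A A)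
  have := IsSimpleModule.nontrivial A T
  obtain ⟨t, ht⟩ := exists_ne (0 : T)
  have hf := IsSemisimpleModule.jacobson_le_ker A A A T (LinearMap.toSpanSingleton A T t)
  refine LinearMap.linearEquiv_of_ne_zero
    (f := (Module.jacobson A A).liftQ (LinearMap.toSpanSingleton A T t) hf) fun h => ht ?_
  rw [← one_smul A t]
  exact congr($h (Submodule.Quotient.mk 1))

theorem exists_fintype_isSimpleModule_existsUnique :
    ∃ (ι : Type u) (_ : Fintype ι) (S : ι → ModuleCat.{u} A), (∀ i, IsSimpleModule A (S i)) ∧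
      ∀ T : ModuleCat.{u} A, IsSimpleModule A T → ∃! i, Nonempty (T ≃ₗ[A] S i) := by
  let B := A ⧸ Module.jacobson A A
  let S (c : isotypicComponents A B) : Submodule A B := c.2.choose
  have hS (c) : IsSimpleModule A (S c) := c.2.choose_spec.1
  have hc (c) : c.1 = isotypicComponent A B (S c) := c.2.choose_spec.2
  refine ⟨isotypicComponents A B, Fintype.ofFinite _, fun c => ModuleCat.of A (S c), hS,
    fun T hT => ?_⟩
  obtain ⟨N, ⟨e⟩⟩ := exists_linearEquiv_submodule_quotient_jacobson (A := A) T
  let c : isotypicComponents A B := ⟨isotypicComponent A B N, N, .congr e.symm, rfl⟩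
  have hNc : N ≤ isotypicComponent A B (S c) := (hc c) ▸ N.le_isotypicComponent
  have : IsSimpleModule A N := .congr e.symm
  obtain ⟨e'⟩ := isIsotypicOfType_submodule_iff.1 (.isotypicComponent A B (S c)) N hNc
  refine ⟨c, ⟨e.trans e'⟩, ?_⟩
  rintro b ⟨eb⟩
  exact Subtype.ext ((hc b).trans
    ((eb.symm.trans (e.trans e')).isotypicComponent_eq.trans (hc c).symm))

end SimpleModules

section Cogenerator

variable {A : Type*} [Ring A]

theorem exists_finset_pi_injective {M Q : Type*} [AddCommGroup M] [Module A M] [IsArtinian A M]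
    [AddCommGroup Q] [Module A Q] (h : ∀ x : M, x ≠ 0 → ∃ f : M →ₗ[A] Q, f x ≠ 0) :
    ∃ s : Finset (M →ₗ[A] Q), Function.Injective (LinearMap.pi fun f : s => f.1) := by
  obtain ⟨s, hs⟩ := Finset.exists_inf_le fun f : M →ₗ[A] Q => LinearMap.ker f
  refine ⟨s, LinearMap.ker_eq_bot.1 (le_bot_iff.1 fun x hx => ?_)⟩
  by_contra hx0
  obtain ⟨f, hf⟩ := h x hx0
  exact hf (hs f (Submodule.mem_finsetInf.2 fun g hg => congr_fun hx ⟨g, hg⟩))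

theorem exists_linearMap_ne_zero {Q : Type v} [AddCommGroup Q] [Module A Q]
    (hQ : Module.Injective A Q)
    (hS : ∀ (S : Type v) [AddCommGroup S] [Module A S], IsSimpleModule A S →
      ∃ f : S →ₗ[A] Q, Function.Injective f)
    {M : Type v} [AddCommGroup M] [Module A M] [IsArtinian A M] {x : M} (hx : x ≠ 0) :
    ∃ f : M →ₗ[A] Q, f x ≠ 0 := by
  obtain ⟨S, hS_atom, hSx⟩ := (eq_bot_or_exists_atom_le (A ∙ x)).resolve_left
    (mt Submodule.span_singleton_eq_bot.1 hx)
  obtain ⟨g, hg⟩ := hS S (isSimpleModule_iff_isAtom.2 hS_atom)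
  obtain ⟨f, hf⟩ := hQ.out S.subtype S.injective_subtype g
  refine ⟨f, fun hfx => hS_atom.1 (le_bot_iff.1 fun y hy => ?_)⟩
  have hfy : A ∙ x ≤ LinearMap.ker f := (Submodule.span_singleton_le_iff_mem _ _).2 hfx
  have hgy : g ⟨y, hy⟩ = 0 := (hf ⟨y, hy⟩).symm.trans (hfy (hSx hy))
  exact congrArg Subtype.val (hg (hgy.trans g.map_zero.symm))

end Cogenerator

section Syzygy

variable {C : Type u} [Category.{v} C] [Abelian C]

/-- `X` is an `n`-th syzygy of `M` in some, not necessarily minimal, projective resolution. In the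
opposite category this is the notion of an `n`-th cosyzygy in an injective resolution. -/
def IsResolutionSyzygy : ℕ → C → C → Prop
  | 0, M, X => Nonempty (X ≅ M)
  | n + 1, M, X => ∃ (Y P : C) (i : Y ⟶ P) (p : P ⟶ M) (w : i ≫ p = 0),
      (ShortComplex.mk i p w).ShortExact ∧ Projective P ∧ IsResolutionSyzygy n Y X

lemma shortExact_pullback {K P S Y : C} {k : K ⟶ P} {p : P ⟶ S} {w : k ≫ p = 0}
    (h : (ShortComplex.mk k p w).ShortExact) (l : Y ⟶ S) :
    (ShortComplex.mk (pullback.lift 0 k (by rw [w, zero_comp]) : K ⟶ pullback l p)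
      (pullback.fst l p) (pullback.lift_fst _ _ _)).ShortExact := by
  have : Mono k := h.mono_f
  have : Epi p := h.epi_g
  have : Mono (pullback.lift 0 k (by rw [w, zero_comp]) ≫ pullback.snd l p) := by
    rwa [pullback.lift_snd]
  have : Mono (pullback.lift 0 k (by rw [w, zero_comp]) : K ⟶ pullback l p) :=
    mono_of_mono _ (pullback.snd l p)
  refine .mk' (ShortComplex.exact_of_f_is_kernel _
    (KernelFork.IsLimit.ofι' _ _ fun {T} t (ht : t ≫ pullback.fst l p = 0) => ?_)) this
    (inferInstanceAs (Epi (pullback.fst l p)))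
  have ht' : (t ≫ pullback.snd l p) ≫ p = 0 := by
    rw [Category.assoc, ← pullback.condition, reassoc_of% ht, zero_comp]
  refine ⟨h.exact.lift _ ht', pullback.hom_ext ?_ ?_⟩
  · rw [Category.assoc, pullback.lift_fst, comp_zero, ht]
  · rw [Category.assoc, pullback.lift_snd]
    exact h.exact.lift_f _ ht'

section Horseshoe

variable {S M Q P L R : C} {i : S ⟶ M} {g : M ⟶ Q} {w : i ≫ g = 0} {p : P ⟶ S} {j : L ⟶ R}
  {q : R ⟶ Q} {w' : j ≫ q = 0} {r : R ⟶ M} {l : L ⟶ S}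

lemma epi_biprod_desc_of_shortExact (h : (ShortComplex.mk i g w).ShortExact) [Epi p] [Epi q]
    (hr : r ≫ g = q) : Epi (biprod.desc (p ≫ i) r) := by
  refine Preadditive.epi_of_cancel_zero _ fun {T} t ht => ?_
  have ht₁ : p ≫ i ≫ t = 0 := by simpa using biprod.inl ≫= ht
  have ht₂ : r ≫ t = 0 := by simpa using biprod.inr ≫= ht
  have hit : i ≫ t = 0 := by rw [← cancel_epi p, ht₁, comp_zero]
  have := h.epi_g
  have ht' : g ≫ h.exact.desc t hit = t := h.exact.g_desc t hit
  have hq : q ≫ h.exact.desc t hit = 0 := by rw [← hr, Category.assoc, ht', ht₂]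
  rw [← ht', zero_of_epi_comp q hq, comp_zero]

lemma mono_biprod_lift_pullback [Mono j] :
    Mono (biprod.lift (pullback.snd l p) (pullback.fst l p ≫ j)) := by
  refine Preadditive.mono_of_cancel_zero _ fun {T} t ht => ?_
  have ht₁ : t ≫ pullback.snd l p = 0 := by simpa using ht =≫ biprod.fst
  have ht₂ : t ≫ pullback.fst l p ≫ j = 0 := by simpa using ht =≫ biprod.snd
  refine pullback.hom_ext ?_ (by rw [ht₁, zero_comp])
  rw [← cancel_mono j, Category.assoc, ht₂, zero_comp, zero_comp]

lemma shortExact_horseshoe (h : (ShortComplex.mk i g w).ShortExact) [Epi p]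
    (hQ : (ShortComplex.mk j q w').ShortExact) (hr : r ≫ g = q)
    -- The sign turns the pullback of `l` and `p` into the kernel of `P ⊞ R ⟶ M`.
    (hl : l ≫ i = -(j ≫ r)) :
    (ShortComplex.mk (biprod.lift (pullback.snd l p) (pullback.fst l p ≫ j))
      (biprod.desc (p ≫ i) r) (by
        rw [biprod.lift_desc, ← pullback.condition_assoc, hl, Preadditive.comp_neg, Category.assoc,
          neg_add_cancel])).ShortExact := by
  have : Mono i := h.mono_f
  have : Mono j := hQ.mono_f
  have : Epi q := hQ.epi_g
  have hmono : Mono (biprod.lift (pullback.snd l p) (pullback.fst l p ≫ j)) :=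
    mono_biprod_lift_pullback
  refine .mk' (ShortComplex.exact_of_f_is_kernel _ (KernelFork.IsLimit.ofι' _ _
    fun {T} (t : T ⟶ P ⊞ R) (ht : t ≫ biprod.desc (p ≫ i) r = 0) => ?_)) hmono
    (epi_biprod_desc_of_shortExact h hr)
  have ht₀ : (t ≫ biprod.fst) ≫ p ≫ i + (t ≫ biprod.snd) ≫ r = 0 := by
    simpa [biprod.desc_eq] using ht
  have ht₂ : (t ≫ biprod.snd) ≫ q = 0 := by
    simpa [w, hr] using ht₀ =≫ g
  let m : T ⟶ L := hQ.exact.lift (t ≫ biprod.snd) ht₂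
  have hm : m ≫ j = t ≫ biprod.snd := hQ.exact.lift_f _ ht₂
  have hcond : m ≫ l = (t ≫ biprod.fst) ≫ p := by
    rw [← cancel_mono i, Category.assoc, hl, Preadditive.comp_neg, reassoc_of% hm]
    simpa using (eq_neg_of_add_eq_zero_left ht₀).symm
  refine ⟨pullback.lift m (t ≫ biprod.fst) hcond, biprod.hom_ext _ _ ?_ ?_⟩
  · rw [Category.assoc, biprod.lift_fst, pullback.lift_snd]
  · rw [Category.assoc, biprod.lift_snd, pullback.lift_fst_assoc, hm]

end Horseshoe

lemma exists_comp_add_comp_eq_id {K P L R Q : C} [Projective P] [Projective R] {i : K ⟶ P}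
    {p : P ⟶ Q} {w : i ≫ p = 0} (hP : (ShortComplex.mk i p w).ShortExact) {j : L ⟶ R} {q : R ⟶ Q}
    {w' : j ≫ q = 0} (hR : (ShortComplex.mk j q w').ShortExact) :
    ∃ (a : K ⟶ L) (b : L ⟶ K) (u : P ⟶ K), a ≫ b + i ≫ u = 𝟙 K := by
  have : Mono i := hP.mono_f
  have : Mono j := hR.mono_f
  have : Epi p := hP.epi_g
  have : Epi q := hR.epi_g
  let f := Projective.factorThru p q
  have hf : f ≫ q = p := Projective.factorThru_comp p q
  let g := Projective.factorThru q p
  have hg : g ≫ p = q := Projective.factorThru_comp q p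
  let a := hR.exact.lift (i ≫ f) (by rw [Category.assoc, hf, w])
  have ha : a ≫ j = i ≫ f := hR.exact.lift_f _ _
  let b := hP.exact.lift (j ≫ g) (by rw [Category.assoc, hg, w'])
  have hb : b ≫ i = j ≫ g := hP.exact.lift_f _ _
  let u := hP.exact.lift (𝟙 P - f ≫ g) (by
    rw [Preadditive.sub_comp, Category.assoc, hg, hf, Category.id_comp, sub_self])
  have hu : u ≫ i = 𝟙 P - f ≫ g := hP.exact.lift_f _ _
  refine ⟨a, b, u, (cancel_mono i).1 ?_⟩
  rw [Preadditive.add_comp, Category.assoc, Category.assoc, hb, hu, reassoc_of% ha,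
    Preadditive.comp_sub, Category.comp_id, Category.id_comp, add_sub_cancel]

theorem exists_comp_add_comp_eq_id_of_isResolutionSyzygy (d : ℕ) {S M Q X X' : C} {i : S ⟶ M}
    {g : M ⟶ Q} {w : i ≫ g = 0} (h : (ShortComplex.mk i g w).ShortExact)
    (hM : ∀ Z, IsResolutionSyzygy d M Z → Projective Z) (hX : IsResolutionSyzygy d S X)
    (hX' : IsResolutionSyzygy (d + 1) Q X') :
    ∃ (P : C) (_ : Projective P) (a : X ⟶ X') (b : X' ⟶ X) (s : X ⟶ P) (t : P ⟶ X),
      a ≫ b + s ≫ t = 𝟙 X := by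
  induction d generalizing S M Q with
  | zero =>
    obtain ⟨L, R, j, q, w', hR, _, ⟨e'⟩⟩ := hX'
    obtain ⟨e⟩ := hX
    have := hM M ⟨Iso.refl M⟩
    obtain ⟨a, b, u, hab⟩ := exists_comp_add_comp_eq_id h hR
    refine ⟨M, this, e.hom ≫ a ≫ e'.inv, e'.hom ≫ b ≫ e.inv, e.hom ≫ i, u ≫ e.inv, ?_⟩
    calc (e.hom ≫ a ≫ e'.inv) ≫ e'.hom ≫ b ≫ e.inv + (e.hom ≫ i) ≫ u ≫ e.inv
        = e.hom ≫ (a ≫ b + i ≫ u) ≫ e.inv := by simp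
      _ = 𝟙 X := by rw [hab, Category.id_comp, e.hom_inv_id]
  | succ d ih =>
    obtain ⟨K, P, k, p, wp, hP, _, hX⟩ := hX
    obtain ⟨L, R, j, q, wq, hR, _, hX'⟩ := hX'
    have : Mono i := h.mono_f
    have : Epi g := h.epi_g
    have : Epi p := hP.epi_g
    let r := Projective.factorThru q g
    have hr : r ≫ g = q := Projective.factorThru_comp q g
    let l := h.exact.lift (-(j ≫ r))
      (by rw [Preadditive.neg_comp, Category.assoc, hr, wq, neg_zero])
    have hl : l ≫ i = -(j ≫ r) := h.exact.lift_f _ _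
    exact ih (shortExact_pullback hP l)
      (fun Z hZ => hM Z ⟨_, _, _, _, _, shortExact_horseshoe h hR hr hl, inferInstance, hZ⟩)
      hX hX'

end Syzygy

section SyzygyDimension

variable {C : Type u} [Category.{v} C] [Abelian C] {n : ℕ}

lemma IsResolutionSyzygy.projective {M X : C} (h : IsResolutionSyzygy n M X)
    (hM : HasProjectiveDimensionLE M n) : Projective X := by
  induction n generalizing M with
  | zero =>
    obtain ⟨e⟩ := h
    have := projective_iff_hasProjectiveDimensionLT_one.2 hM
    exact Projective.of_iso e.symm this
  | succ n ih =>
    obtain ⟨Y, P, i, p, w, hS, hP, hY⟩ := h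
    exact ih hY ((hS.hasProjectiveDimensionLT_X₃_iff n hP).1 hM)

lemma IsResolutionSyzygy.injective_unop {M X : Cᵒᵖ} (h : IsResolutionSyzygy n M X)
    (hM : HasInjectiveDimensionLE M.unop n) : Injective X.unop := by
  induction n generalizing M with
  | zero =>
    obtain ⟨e⟩ := h
    have := injective_iff_hasInjectiveDimensionLT_one.2 hM
    exact Injective.of_iso e.unop this
  | succ n ih =>
    obtain ⟨Y, P, i, p, w, hS, hP, hY⟩ := h
    have hP' : Injective P.unop := inferInstance
    exact ih hY ((hS.unop.hasInjectiveDimensionLT_X₃_iff n hP').2 hM)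

variable [HasExt.{w} C]

lemma IsResolutionSyzygy.subsingleton_ext_iff {M X : C} (h : IsResolutionSyzygy n M X) (N : C)
    (k : ℕ) : Subsingleton (Ext X N (k + 1)) ↔ Subsingleton (Ext M N (k + n + 1)) := by
  induction n generalizing M with
  | zero =>
    obtain ⟨e⟩ := h
    let eExt := (((extFunctor (k + 1)).mapIso e.op).app N).addCommGroupIsoToAddEquiv
    exact eExt.subsingleton_congr.symm
  | succ n ih =>
    obtain ⟨Y, P, i, p, w, hS, _, hY⟩ := h
    exact (ih hY).trans (subsingleton_ext_X₁_left_iff hS N (k + n))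

lemma IsResolutionSyzygy.subsingleton_ext_unop_iff {M X : Cᵒᵖ} (h : IsResolutionSyzygy n M X)
    (N : C) (k : ℕ) :
    Subsingleton (Ext N X.unop (k + 1)) ↔ Subsingleton (Ext N M.unop (k + n + 1)) := by
  induction n generalizing M with
  | zero =>
    obtain ⟨e⟩ := h
    let eExt := ((extFunctorObj N (k + 1)).mapIso e.unop).addCommGroupIsoToAddEquiv
    exact eExt.subsingleton_congr.symm
  | succ n ih =>
    obtain ⟨Y, P, i, p, w, hS, _, hY⟩ := h
    have : Injective (ShortComplex.mk i p w).unop.X₂ := inferInstanceAs (Injective P.unop)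
    exact (ih hY).trans (subsingleton_ext_X₃_right_iff hS.unop N (k + n))

end SyzygyDimension

section MinimalSyzygy

variable {A : Type} [Ring A] {n : ℕ} {M X : ModuleCat.{0} A}

lemma IsNthSyzygy.isResolutionSyzygy (h : IsNthSyzygy A n M X) : IsResolutionSyzygy n M X := by
  induction n generalizing M with
  | zero => exact h
  | succ n ih =>
    obtain ⟨Y, ⟨P, f, ⟨hP, _, -⟩, ⟨e⟩⟩, hX⟩ := h
    let S := ShortComplex.mk (e.hom ≫ kernel.ι f) f (by simp)
    let eS : ShortComplex.mk _ _ (kernel.condition f) ≅ S :=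
      ShortComplex.isoMk e.symm (Iso.refl P) (Iso.refl M) (by simp [S])
    exact ⟨Y, P, _, f, _, ShortComplex.shortExact_of_iso eS (shortExact_kernel f), hP, ih hX⟩

lemma IsNthCosyzygy.isResolutionSyzygy_op (h : IsNthCosyzygy A n M X) :
    IsResolutionSyzygy n (Opposite.op M) (Opposite.op X) := by
  induction n generalizing M with
  | zero => exact h.map fun e => e.symm.op
  | succ n ih =>
    obtain ⟨Y, ⟨I, f, ⟨hI, _, -⟩, ⟨e⟩⟩, hX⟩ := h
    let S := ShortComplex.mk f (cokernel.π f ≫ e.inv) (by simp)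
    let eS : ShortComplex.mk _ _ (cokernel.condition f) ≅ S :=
      ShortComplex.isoMk (Iso.refl M) (Iso.refl I) e.symm (by simp [S]) (by simp [S])
    have hS : S.ShortExact := ShortComplex.shortExact_of_iso eS (shortExact_cokernel f)
    exact ⟨_, _, _, _, _, hS.op, inferInstance, ih hX⟩

end MinimalSyzygy

section FiniteEnvelope

variable {A : Type} [Ring A]

lemma IsInjectiveEnvelopeHom.finite [IsNoetherianRing A] {M I J : ModuleCat.{0} A} {f : M ⟶ I}
    (hf : IsInjectiveEnvelopeHom A f) (g : M ⟶ J) [Mono g] [Injective J] [Module.Finite A J] :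
    Module.Finite A I := by
  have := hf.2.1
  have hfg : f ≫ Injective.factorThru g f = g := Injective.comp_factorThru g f
  have : Mono (Injective.factorThru g f) := hf.2.2 _ _ (hfg.symm ▸ inferInstance)
  exact Module.Finite.of_injective _ ((ModuleCat.mono_iff_injective _).1 this)

lemma injective_pi {ι : Type} (I : ι → ModuleCat.{0} A) [∀ i, Injective (I i)] :
    Injective (ModuleCat.of A (∀ i, I i)) :=
  Injective.of_iso (ModuleCat.piIsoPi I) inferInstance

lemma IsMinimalInjectiveCogenerator.injective {Q : ModuleCat.{0} A}
    (hQ : IsMinimalInjectiveCogenerator A Q) : Injective Q := by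
  obtain ⟨_, _, _, _, _, _, hf⟩ := hQ
  exact hf.1

lemma IsMinimalInjectiveCogenerator.exists_injective_of_isSimpleModule {Q : ModuleCat.{0} A}
    (hQ : IsMinimalInjectiveCogenerator A Q) (T : Type) [AddCommGroup T] [Module A T]
    (hT : IsSimpleModule A T) : ∃ g : T →ₗ[A] Q, Function.Injective g := by
  classical
  obtain ⟨ι, _, S, _, hS, f, hf⟩ := hQ
  obtain ⟨i, ⟨e⟩, -⟩ := hS (ModuleCat.of A T) hT
  refine ⟨f.hom ∘ₗ LinearMap.single A (fun i => S i) i ∘ₗ e.toLinearMap, ?_⟩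
  exact ((ModuleCat.mono_iff_injective f).1 hf.2.1).comp ((Pi.single_injective i).comp e.injective)

lemma IsMinimalInjectiveCogenerator.exists_finset_pi_injective {Q : ModuleCat.{0} A}
    (hQ : IsMinimalInjectiveCogenerator A Q) (M : Type) [AddCommGroup M] [Module A M]
    [IsArtinian A M] :
    ∃ s : Finset (M →ₗ[A] Q), Function.Injective (LinearMap.pi fun f : s => f.1) :=
  ArtinAlg.exists_finset_pi_injective fun _ hx => exists_linearMap_ne_zero
    ((Module.injective_iff_injective_object A Q).2 hQ.injective)
    hQ.exists_injective_of_isSimpleModule hx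

variable (hI : ∀ S : ModuleCat.{0} A, IsSimpleModule A S →
  ∃ (I : ModuleCat.{0} A) (f : S ⟶ I), Module.Finite A I ∧ Injective I ∧ Mono f)

include hI in
lemma IsMinimalInjectiveCogenerator.finite [IsNoetherianRing A] {Q : ModuleCat.{0} A}
    (hQ : IsMinimalInjectiveCogenerator A Q) : Module.Finite A Q := by
  obtain ⟨ι, _, S, hS, -, f, hf⟩ := hQ
  choose I g hfin hinj hmono using fun i => hI (S i) (hS i)
  let φ : (∀ i, S i) →ₗ[A] ∀ i, I i := LinearMap.pi fun i => (g i).hom ∘ₗ LinearMap.proj i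
  have hφ : Function.Injective φ :=
    Function.Injective.piMap fun i => (ModuleCat.mono_iff_injective (g i)).1 (hmono i)
  have : Mono (ModuleCat.ofHom φ) := (ModuleCat.mono_iff_injective _).2 hφ
  have := injective_pi I
  have : Module.Finite A (ModuleCat.of A (∀ i, I i)) := Module.Finite.pi
  exact hf.finite (ModuleCat.ofHom φ)

variable [IsArtinianRing A]

theorem exists_isMinimalInjectiveCogenerator :
    ∃ Q : ModuleCat.{0} A, IsMinimalInjectiveCogenerator A Q := by
  obtain ⟨ι, hι, S, hS, hS'⟩ := exists_fintype_isSimpleModule_existsUnique (A := A)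
  obtain ⟨Q, f, hf, -⟩ := exists_isInjectiveEnvelopeHom (ModuleCat.of A (∀ i, S i))
  exact ⟨Q, ι, hι, S, hS, hS', f, hf⟩

theorem exists_isNthSyzygy (n : ℕ) (M : ModuleCat.{0} A) [Module.Finite A M] :
    ∃ X : ModuleCat.{0} A, Module.Finite A X ∧ IsNthSyzygy A n M X := by
  induction n generalizing M with
  | zero => exact ⟨M, inferInstance, ⟨Iso.refl M⟩⟩
  | succ n ih =>
    obtain ⟨P, f, _, hf⟩ := exists_isProjectiveCoverHom M
    have : Module.Finite A (kernel f : ModuleCat.{0} A) :=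
      .of_injective _ ((ModuleCat.mono_iff_injective (kernel.ι f)).1 inferInstance)
    obtain ⟨X, hXfin, hX⟩ := ih (kernel f)
    exact ⟨X, hXfin, kernel f, ⟨P, f, hf, ⟨Iso.refl _⟩⟩, hX⟩

include hI

theorem exists_finite_isInjectiveEnvelopeHom (M : ModuleCat.{0} A) [Module.Finite A M] :
    ∃ (I : ModuleCat.{0} A) (f : M ⟶ I), Module.Finite A I ∧ IsInjectiveEnvelopeHom A f := by
  obtain ⟨Q, hQ⟩ := exists_isMinimalInjectiveCogenerator (A := A)
  obtain ⟨s, hs⟩ := hQ.exists_finset_pi_injective M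
  obtain ⟨I, f, hf, -⟩ := exists_isInjectiveEnvelopeHom M
  have := hQ.injective
  have := hQ.finite hI
  have := injective_pi fun _ : s => Q
  have : Module.Finite A (ModuleCat.of A (s → Q)) := Module.Finite.pi
  have : Mono (ModuleCat.ofHom (LinearMap.pi fun f : s => f.1)) :=
    (ModuleCat.mono_iff_injective _).2 hs
  exact ⟨I, f, hf.finite (ModuleCat.ofHom (LinearMap.pi fun f : s => f.1)), hf⟩

theorem exists_isNthCosyzygy (n : ℕ) (M : ModuleCat.{0} A) [Module.Finite A M] :
    ∃ X : ModuleCat.{0} A, Module.Finite A X ∧ IsNthCosyzygy A n M X := by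
  induction n generalizing M with
  | zero => exact ⟨M, inferInstance, ⟨Iso.refl M⟩⟩
  | succ n ih =>
    obtain ⟨I, f, _, hf⟩ := exists_finite_isInjectiveEnvelopeHom hI M
    have : Module.Finite A (cokernel f : ModuleCat.{0} A) :=
      .of_surjective _ ((ModuleCat.epi_iff_surjective (cokernel.π f)).1 inferInstance)
    obtain ⟨X, hXfin, hX⟩ := ih (cokernel f)
    exact ⟨X, hXfin, cokernel f, ⟨I, f, hf, ⟨Iso.refl _⟩⟩, hX⟩

end FiniteEnvelope

section AddClosure

variable {A : Type} [Ring A] {X Y W : ModuleCat.{0} A}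

lemma inAdd_of_sum_comp_eq_id {ι : Type*} [Fintype ι] (a : ι → (X ⟶ W)) (b : ι → (W ⟶ X))
    (hab : ∑ i, a i ≫ b i = 𝟙 X) : InAdd A X W := by
  let e := Fintype.equivFin ι
  refine ⟨Fintype.card ι, ModuleCat.ofHom (LinearMap.pi fun k => (a (e.symm k)).hom),
    ModuleCat.ofHom (∑ k, (b (e.symm k)).hom ∘ₗ LinearMap.proj k), ?_⟩
  rw [← hab, ← e.symm.sum_comp]
  ext x
  simp [ModuleCat.hom_sum]

lemma InAdd.exists_sum_comp_eq_id (h : InAdd A X W) :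
    ∃ (n : ℕ) (a : Fin n → (X ⟶ W)) (b : Fin n → (W ⟶ X)), ∑ k, a k ≫ b k = 𝟙 X := by
  obtain ⟨n, i, r, hir⟩ := h
  refine ⟨n, fun k => i ≫ ModuleCat.ofHom (LinearMap.proj k),
    fun k => ModuleCat.ofHom (LinearMap.single A (fun _ => W) k) ≫ r, ?_⟩
  rw [← hir]
  ext x
  simp [ModuleCat.hom_sum, ← map_sum, Finset.univ_sum_single]

lemma inAdd_prod_of_comp_add_comp_eq_id {G : Type} [AddCommGroup G] [Module A G] {ι : Type}
    [Finite ι] (a : X ⟶ Y) (b : Y ⟶ X) (s : X ⟶ ModuleCat.of A (ι → G))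
    (t : ModuleCat.of A (ι → G) ⟶ X) (hab : a ≫ b + s ≫ t = 𝟙 X) :
    InAdd A X (ModuleCat.of A (G × Y)) := by
  classical
  have := Fintype.ofFinite ι
  refine inAdd_of_sum_comp_eq_id (ι := Option ι)
    (fun o => o.elim (a ≫ ModuleCat.ofHom (LinearMap.inr A G Y))
      fun j => s ≫ ModuleCat.ofHom (LinearMap.inl A G Y ∘ₗ LinearMap.proj j))
    (fun o => o.elim (ModuleCat.ofHom (LinearMap.snd A G Y) ≫ b)
      fun j => ModuleCat.ofHom (LinearMap.single A (fun _ => G) j ∘ₗ LinearMap.fst A G Y) ≫ t) ?_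
  rw [← hab, Fintype.sum_option]
  ext x
  simp [ModuleCat.hom_sum, ← map_sum, Finset.univ_sum_single]

lemma inAdd_prod_of_projective [Module.Finite A X] {P : ModuleCat.{0} A} [Projective P]
    (a : X ⟶ Y) (b : Y ⟶ X) (s : X ⟶ P) (t : P ⟶ X) (hab : a ≫ b + s ≫ t = 𝟙 X) :
    InAdd A X (ModuleCat.of A (A × Y)) := by
  obtain ⟨k, f, hf⟩ := Module.Finite.exists_fin' A X
  have : Epi (ModuleCat.ofHom f) := (ModuleCat.epi_iff_surjective _).2 hf
  refine inAdd_prod_of_comp_add_comp_eq_id a b (s ≫ Projective.factorThru t (ModuleCat.ofHom f))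
    (ModuleCat.ofHom f) ?_
  rw [Category.assoc, Projective.factorThru_comp, hab]

lemma inAdd_prod_of_injective [IsArtinian A X] {Q I : ModuleCat.{0} A}
    (hQ : IsMinimalInjectiveCogenerator A Q) [Injective I]
    (a : X ⟶ Y) (b : Y ⟶ X) (s : X ⟶ I) (t : I ⟶ X) (hab : a ≫ b + s ≫ t = 𝟙 X) :
    InAdd A X (ModuleCat.of A (Q × Y)) := by
  obtain ⟨F, hF⟩ := hQ.exists_finset_pi_injective X
  let f : X ⟶ ModuleCat.of A (F → Q) := ModuleCat.ofHom (LinearMap.pi fun g : F => g.1)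
  have : Mono f := (ModuleCat.mono_iff_injective _).2 hF
  refine inAdd_prod_of_comp_add_comp_eq_id a b f (Injective.factorThru s f ≫ t) ?_
  rw [Injective.comp_factorThru_assoc, hab]

lemma shortExact_prod (X Y : ModuleCat.{0} A) :
    (ModuleCat.shortComplexOfCompEqZero (LinearMap.inl A X Y) (LinearMap.snd A X Y)
      (LinearMap.snd_comp_inl A X Y)).ShortExact :=
  ModuleCat.shortComplex_shortExact _ .inl_snd LinearMap.inl_injective LinearMap.snd_surjective

lemma InAdd.subsingleton_ext_left {P : ModuleCat.{0} A} (h : InAdd A X (ModuleCat.of A (P × Y)))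
    (N : ModuleCat.{0} A) (n : ℕ) (hP : Subsingleton (Ext P N n)) (hY : Subsingleton (Ext Y N n)) :
    Subsingleton (Ext X N n) := by
  obtain ⟨k, a, b, hab⟩ := h.exists_sum_comp_eq_id
  exact subsingleton_ext_of_sum_comp_eq_id_left a b hab N n fun _ =>
    subsingleton_ext_X₂_left (shortExact_prod P Y) N n hP hY

lemma InAdd.subsingleton_ext_right {I : ModuleCat.{0} A} (h : InAdd A X (ModuleCat.of A (I × Y)))
    (N : ModuleCat.{0} A) (n : ℕ) (hI : Subsingleton (Ext N I n)) (hY : Subsingleton (Ext N Y n)) :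
    Subsingleton (Ext N X n) := by
  obtain ⟨k, a, b, hab⟩ := h.exists_sum_comp_eq_id
  exact subsingleton_ext_of_sum_comp_eq_id_right a b hab N n fun _ =>
    subsingleton_ext_X₂_right (shortExact_prod I Y) N n hI hY

end AddClosure

section Levels

variable {A : Type} [Ring A] [IsArtinianRing A] {S M : ModuleCat.{0} A} {n : ℕ}

theorem delLE_of_mono (i : S ⟶ M) [Mono i] [Module.Finite A M] (hM : HasProjectiveDimensionLE M n) :
    DelLE A n S := by
  have : Module.Finite A S := .of_injective _ ((ModuleCat.mono_iff_injective i).1 inferInstance)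
  have : Module.Finite A (cokernel i : ModuleCat.{0} A) :=
    .of_surjective _ ((ModuleCat.epi_iff_surjective (cokernel.π i)).1 inferInstance)
  obtain ⟨X, _, hX⟩ := exists_isNthSyzygy n S
  obtain ⟨X', -, hX'⟩ := exists_isNthSyzygy (n + 1) (cokernel i)
  obtain ⟨P, _, a, b, s, t, hab⟩ := exists_comp_add_comp_eq_id_of_isResolutionSyzygy n
    (shortExact_cokernel i) (fun Z hZ => hZ.projective hM) hX.isResolutionSyzygy
    hX'.isResolutionSyzygy
  exact ⟨X, hX, cokernel i, inferInstance, X', hX', inAdd_prod_of_projective a b s t hab⟩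

theorem desLE_of_epi (hI : ∀ S : ModuleCat.{0} A, IsSimpleModule A S →
      ∃ (I : ModuleCat.{0} A) (f : S ⟶ I), Module.Finite A I ∧ Injective I ∧ Mono f)
    (p : M ⟶ S) [Epi p] [Module.Finite A M] (hM : HasInjectiveDimensionLE M n) : DesLE A n S := by
  have : Module.Finite A S := .of_surjective _ ((ModuleCat.epi_iff_surjective p).1 inferInstance)
  have : Module.Finite A (kernel p : ModuleCat.{0} A) :=
    .of_injective _ ((ModuleCat.mono_iff_injective (kernel.ι p)).1 inferInstance)
  obtain ⟨X, _, hX⟩ := exists_isNthCosyzygy hI n S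
  obtain ⟨X', -, hX'⟩ := exists_isNthCosyzygy hI (n + 1) (kernel p)
  obtain ⟨P, _, a, b, s, t, hab⟩ := exists_comp_add_comp_eq_id_of_isResolutionSyzygy n
    (shortExact_kernel p).op
    (fun Z hZ => Injective.injective_iff_projective_op.1 (hZ.injective_unop hM))
    hX.isResolutionSyzygy_op hX'.isResolutionSyzygy_op
  have hab' : b.unop ≫ a.unop + t.unop ≫ s.unop = 𝟙 X := congrArg Quiver.Hom.unop hab
  obtain ⟨Q, hQ⟩ := exists_isMinimalInjectiveCogenerator (A := A)
  exact ⟨X, hX, Q, hQ, kernel p, inferInstance, X', hX', inAdd_prod_of_injective hQ _ _ _ _ hab'⟩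

end Levels

section LevelsAndExt

variable {A : Type} [Ring A] {S N : ModuleCat.{0} A} {m n : ℕ}

theorem DelLE.subsingleton_ext (h : DelLE A m S) (hmn : m ≤ n)
    (hN : HasInjectiveDimensionLE N (n + 1)) : Subsingleton (Ext S N (n + 1)) := by
  obtain ⟨X, hX, M, -, Y, hY, hXY⟩ := h
  obtain ⟨k, rfl⟩ := Nat.exists_eq_add_of_le' hmn
  have hM : Subsingleton (Ext M N (k + (m + 1) + 1)) :=
    HasInjectiveDimensionLT.subsingleton _ (k + m + 2) _ (by lia) M
  exact (hX.isResolutionSyzygy.subsingleton_ext_iff N k).1 <|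
    hXY.subsingleton_ext_left (P := ModuleCat.of A A) N (k + 1)
      (HasProjectiveDimensionLT.subsingleton _ 1 _ (by lia) N)
      ((hY.isResolutionSyzygy.subsingleton_ext_iff N k).2 hM)

theorem DesLE.subsingleton_ext (h : DesLE A m S) (hmn : m ≤ n)
    (hN : HasProjectiveDimensionLE N (n + 1)) : Subsingleton (Ext N S (n + 1)) := by
  obtain ⟨X, hX, Q, hQ, M, -, Y, hY, hXY⟩ := h
  obtain ⟨k, rfl⟩ := Nat.exists_eq_add_of_le' hmn
  have hM : Subsingleton (Ext N M (k + (m + 1) + 1)) :=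
    HasProjectiveDimensionLT.subsingleton _ (k + m + 2) _ (by lia) M
  have := hQ.injective
  exact (hX.isResolutionSyzygy_op.subsingleton_ext_unop_iff N k).1 <|
    hXY.subsingleton_ext_right N (k + 1) (HasInjectiveDimensionLT.subsingleton _ 1 _ (by lia) N)
      ((hY.isResolutionSyzygy_op.subsingleton_ext_unop_iff N k).2 hM)

end LevelsAndExt

section Dimension

variable {A : Type} [Ring A] {M : ModuleCat.{0} A} {n : ℕ}

lemma projDimLE_iff : ProjDimLE A n M ↔ HasProjectiveDimensionLE M n := by
  constructor
  · intro h
    induction h with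
    | zero M h => exact projective_iff_hasProjectiveDimensionLT_one.1 h
    | succ n M P f hP hf _ ih =>
      exact ((shortExact_kernel f).hasProjectiveDimensionLT_X₃_iff n hP).2 ih
  · intro h
    induction n generalizing M with
    | zero => exact .zero _ (projective_iff_hasProjectiveDimensionLT_one.2 h)
    | succ n ih =>
      have hS := shortExact_kernel (Projective.π M)
      exact .succ n M _ (Projective.π M) inferInstance inferInstance
        (ih ((hS.hasProjectiveDimensionLT_X₃_iff n inferInstance).1 h))

lemma injDimLE_iff : InjDimLE A n M ↔ HasInjectiveDimensionLE M n := by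
  constructor
  · intro h
    induction h with
    | zero M h => exact injective_iff_hasInjectiveDimensionLT_one.1 h
    | succ n M I f hI hf _ ih =>
      exact ((shortExact_cokernel f).hasInjectiveDimensionLT_X₃_iff n hI).1 ih
  · intro h
    induction n generalizing M with
    | zero => exact .zero _ (injective_iff_hasInjectiveDimensionLT_one.2 h)
    | succ n ih =>
      have hS := shortExact_cokernel (Injective.ι M)
      exact .succ n M _ (Injective.ι M) inferInstance inferInstance
        (ih ((hS.hasInjectiveDimensionLT_X₃_iff n inferInstance).2 h))

lemma sInf_natCast_le_iff {p : ℕ → Prop} :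
    sInf {d : ℕ∞ | ∃ m : ℕ, d = m ∧ p m} ≤ n ↔ ∃ m ≤ n, p m := by
  constructor
  · intro h
    have hne : {d : ℕ∞ | ∃ m : ℕ, d = m ∧ p m}.Nonempty := by
      by_contra hempty
      rw [Set.not_nonempty_iff_eq_empty.1 hempty, sInf_empty] at h
      exact ENat.natCast_ne_top n (top_le_iff.1 h)
    obtain ⟨m, hm, hpm⟩ := csInf_mem hne
    exact ⟨m, Nat.cast_le.1 (hm.symm.trans_le h), hpm⟩
  · rintro ⟨m, hmn, hpm⟩
    exact sInf_le_of_le ⟨m, rfl, hpm⟩ (Nat.cast_le.2 hmn)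

lemma projDim_le_iff : projDim A M ≤ n ↔ HasProjectiveDimensionLE M n := by
  simp_rw [projDim, sInf_natCast_le_iff, projDimLE_iff]
  constructor
  · rintro ⟨m, hmn, _⟩
    exact hasProjectiveDimensionLT_of_ge M (m + 1) (n + 1) (by lia)
  · exact fun h => ⟨n, le_rfl, h⟩

lemma injDim_le_iff : injDim A M ≤ n ↔ HasInjectiveDimensionLE M n := by
  simp_rw [injDim, sInf_natCast_le_iff, injDimLE_iff]
  constructor
  · rintro ⟨m, hmn, _⟩
    exact hasInjectiveDimensionLT_of_ge M (m + 1) (n + 1) (by lia)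
  · exact fun h => ⟨n, le_rfl, h⟩

end Dimension

section FinitisticDimension

variable {A : Type} [Ring A] {c : ℕ∞}

lemma projDim_le_finProDim {M : ModuleCat.{0} A} (hfin : Module.Finite A M)
    (hM : projDim A M ≠ ⊤) : projDim A M ≤ finProDim A :=
  le_sSup ⟨M, hfin, rfl, hM⟩

lemma injDim_le_finInjDim {M : ModuleCat.{0} A} (hfin : Module.Finite A M)
    (hM : injDim A M ≠ ⊤) : injDim A M ≤ finInjDim A :=
  le_sSup ⟨M, hfin, rfl, hM⟩

lemma finProDim_le_bigFinProDim : finProDim A ≤ bigFinProDim A :=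
  sSup_le_sSup fun _ ⟨M, _, hM⟩ => ⟨M, hM⟩

lemma finInjDim_le_bigFinInjDim : finInjDim A ≤ bigFinInjDim A :=
  sSup_le_sSup fun _ ⟨M, _, hM⟩ => ⟨M, hM⟩

theorem bigFinProDim_le [IsSemiprimaryRing A]
    (h : ∀ n : ℕ, c ≤ n → ∀ N S : ModuleCat.{0} A, IsSimpleModule A S →
      HasProjectiveDimensionLE N (n + 1) → Subsingleton (Ext N S (n + 1))) :
    bigFinProDim A ≤ c := by
  have key (n : ℕ) (N : ModuleCat.{0} A) (hN : HasProjectiveDimensionLE N n) :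
      projDim A N ≤ c := by
    induction n with
    | zero => exact (projDim_le_iff.2 hN).trans zero_le
    | succ n ih =>
      rcases le_or_gt c n with hc | hc
      · exact ih (hasProjectiveDimensionLE_of_subsingleton_ext
          (fun S : ModuleCat.{0} A => IsSimpleModule A S) projective_of_subsingleton_ext_simple n N
          fun S hS => h n hc N S hS hN)
      · exact (projDim_le_iff.2 hN).trans (Order.add_one_le_of_lt hc)
  refine sSup_le ?_
  rintro _ ⟨N, rfl, hN⟩
  obtain ⟨n, hn⟩ := ENat.ne_top_iff_exists.1 hN
  exact key n N (projDim_le_iff.1 hn.ge)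

theorem bigFinInjDim_le [IsArtinianRing A]
    (h : ∀ n : ℕ, c ≤ n → ∀ N S : ModuleCat.{0} A, IsSimpleModule A S →
      HasInjectiveDimensionLE N (n + 1) → Subsingleton (Ext S N (n + 1))) :
    bigFinInjDim A ≤ c := by
  have key (n : ℕ) (N : ModuleCat.{0} A) (hN : HasInjectiveDimensionLE N n) :
      injDim A N ≤ c := by
    induction n with
    | zero => exact (injDim_le_iff.2 hN).trans zero_le
    | succ n ih =>
      rcases le_or_gt c n with hc | hc
      · exact ih (hasInjectiveDimensionLE_of_subsingleton_ext
          (fun S : ModuleCat.{0} A => IsSimpleModule A S) injective_of_subsingleton_ext_simple n N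
          fun S hS => h n hc N S hS hN)
      · exact (injDim_le_iff.2 hN).trans (Order.add_one_le_of_lt hc)
  refine sSup_le ?_
  rintro _ ⟨N, rfl, hN⟩
  obtain ⟨n, hn⟩ := ENat.ne_top_iff_exists.1 hN
  exact key n N (injDim_le_iff.1 hn.ge)

theorem bigFinProDim_le_of_epi [IsSemiprimaryRing A]
    (h : ∀ S : ModuleCat.{0} A, IsSimpleModule A S →
      ∃ M : ModuleCat.{0} A, (∃ p : M ⟶ S, Epi p) ∧ injDim A M ≤ c) :
    bigFinProDim A ≤ c := by
  refine bigFinProDim_le fun n hc N S hS hN => ?_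
  obtain ⟨M, ⟨p, _⟩, hM⟩ := h S hS
  exact subsingleton_ext_of_epi p (injDim_le_iff.1 (hM.trans hc)) hN

theorem bigFinInjDim_le_of_mono [IsArtinianRing A]
    (h : ∀ S : ModuleCat.{0} A, IsSimpleModule A S →
      ∃ M : ModuleCat.{0} A, (∃ i : S ⟶ M, Mono i) ∧ projDim A M ≤ c) :
    bigFinInjDim A ≤ c := by
  refine bigFinInjDim_le fun n hc N S hS hN => ?_
  obtain ⟨M, ⟨i, _⟩, hM⟩ := h S hS
  exact subsingleton_ext_of_mono i (projDim_le_iff.1 (hM.trans hc)) hN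

theorem bigFinProDim_le_desAlg [IsSemiprimaryRing A] : bigFinProDim A ≤ desAlg A := by
  refine bigFinProDim_le fun n hc N S hS hN => ?_
  have hS_le : desLevel A S ≤ desAlg A := le_sSup ⟨S, hS, rfl⟩
  obtain ⟨m, hmn, hm⟩ := sInf_natCast_le_iff.1 (hS_le.trans hc)
  exact hm.subsingleton_ext hmn hN

theorem bigFinInjDim_le_delAlg [IsArtinianRing A] : bigFinInjDim A ≤ delAlg A := by
  refine bigFinInjDim_le fun n hc N S hS hN => ?_
  have hS_le : delLevel A S ≤ delAlg A := le_sSup ⟨S, hS, rfl⟩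
  obtain ⟨m, hmn, hm⟩ := sInf_natCast_le_iff.1 (hS_le.trans hc)
  exact hm.subsingleton_ext hmn hN

end FinitisticDimension

section LevelBounds

variable {A : Type} [Ring A] [IsArtinianRing A] {S M : ModuleCat.{0} A} {c : ℕ∞}

theorem delLevel_le_projDim (i : S ⟶ M) [Mono i] [Module.Finite A M] :
    delLevel A S ≤ projDim A M := by
  refine le_sInf ?_
  rintro _ ⟨n, rfl, hn⟩
  exact sInf_le ⟨n, rfl, delLE_of_mono i (projDimLE_iff.1 hn)⟩

theorem delAlg_le_of_mono (h : ∀ S : ModuleCat.{0} A, IsSimpleModule A S →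
      ∃ M : ModuleCat.{0} A, Module.Finite A M ∧ (∃ i : S ⟶ M, Mono i) ∧ projDim A M ≤ c) :
    delAlg A ≤ c := by
  refine sSup_le ?_
  rintro _ ⟨S, hS, rfl⟩
  obtain ⟨M, _, ⟨i, _⟩, hM⟩ := h S hS
  exact (delLevel_le_projDim i).trans hM

variable (hI : ∀ S : ModuleCat.{0} A, IsSimpleModule A S →
  ∃ (I : ModuleCat.{0} A) (f : S ⟶ I), Module.Finite A I ∧ Injective I ∧ Mono f)
include hI

theorem desLevel_le_injDim (p : M ⟶ S) [Epi p] [Module.Finite A M] :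
    desLevel A S ≤ injDim A M := by
  refine le_sInf ?_
  rintro _ ⟨n, rfl, hn⟩
  exact sInf_le ⟨n, rfl, desLE_of_epi hI p (injDimLE_iff.1 hn)⟩

theorem desAlg_le_of_epi (h : ∀ S : ModuleCat.{0} A, IsSimpleModule A S →
      ∃ M : ModuleCat.{0} A, Module.Finite A M ∧ (∃ p : M ⟶ S, Epi p) ∧ injDim A M ≤ c) :
    desAlg A ≤ c := by
  refine sSup_le ?_
  rintro _ ⟨S, hS, rfl⟩
  obtain ⟨M, _, ⟨p, _⟩, hM⟩ := h S hS
  exact (desLevel_le_injDim hI p).trans hM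

end LevelBounds

theorem exists_finite_injective_mono (R : Type*) [CommRing R] [IsArtinianRing R] {A : Type}
    [Ring A] [Algebra R A] [Module.Finite R A] (M : ModuleCat.{0} A) [Module.Finite A M] :
    ∃ (I : ModuleCat.{0} A) (f : M ⟶ I), Module.Finite A I ∧ Injective I ∧ Mono f := by
  obtain ⟨I, f, ⟨hI, hmono, -⟩, hf⟩ := exists_isInjectiveEnvelopeHom M
  let _ : Module R I := Module.compHom I (algebraMap R A)
  have : IsScalarTower R A I := ⟨fun r a x => by rw [Algebra.smul_def, mul_smul]; rfl⟩
  have : IsArtinianRing A := IsArtinianRing.of_finite R A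
  have : Module.Finite R (LinearMap.range f.hom) := Module.Finite.trans A _
  exact ⟨I, f, finite_of_isEssential R hf, hI, hmono⟩

end ArtinAlg

open ArtinAlg in
theorem statement_4_general (A : Type) [Ring A] [IsArtinianRing A]
    (hI : ∀ S : ModuleCat.{0} A, IsSimpleModule A S →
      ∃ (I : ModuleCat.{0} A) (f : S ⟶ I), Module.Finite A I ∧ Injective I ∧ Mono f)
    (MS NS : ModuleCat.{0} A → ModuleCat.{0} A)
    (hMS : ∀ S : ModuleCat.{0} A, IsSimpleModule A S →
      Module.Finite A (MS S) ∧ (∃ f : S ⟶ MS S, Mono f) ∧ projDim A (MS S) ≠ ⊤)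
    (hNS : ∀ S : ModuleCat.{0} A, IsSimpleModule A S →
      Module.Finite A (NS S) ∧ (∃ f : NS S ⟶ S, Epi f) ∧ injDim A (NS S) ≠ ⊤)
    (d d' : ℕ∞)
    (hd : d = sSup {x : ℕ∞ | ∃ S : ModuleCat.{0} A, IsSimpleModule A S ∧ x = projDim A (MS S)})
    (hd' : d' = sSup {x : ℕ∞ | ∃ S : ModuleCat.{0} A, IsSimpleModule A S ∧ x = injDim A (NS S)}) :
    finProDim A = finInjDim A ∧ finInjDim A = bigFinProDim A ∧
      bigFinProDim A = bigFinInjDim A ∧ bigFinInjDim A = delAlg A ∧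
      delAlg A = desAlg A ∧ desAlg A = d ∧ d = d' := by
  have hMd (S : ModuleCat.{0} A) (hS : IsSimpleModule A S) : projDim A (MS S) ≤ d :=
    hd ▸ le_sSup ⟨S, hS, rfl⟩
  have hNd (S : ModuleCat.{0} A) (hS : IsSimpleModule A S) : injDim A (NS S) ≤ d' :=
    hd' ▸ le_sSup ⟨S, hS, rfl⟩
  have hd_le : d ≤ finProDim A := by
    rw [hd]
    exact sSup_le fun _ ⟨S, hS, hx⟩ => hx ▸ projDim_le_finProDim (hMS S hS).1 (hMS S hS).2.2
  have hd'_le : d' ≤ finInjDim A := by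
    rw [hd']
    exact sSup_le fun _ ⟨S, hS, hx⟩ => hx ▸ injDim_le_finInjDim (hNS S hS).1 (hNS S hS).2.2
  have hfinPro := finProDim_le_bigFinProDim (A := A)
  have hfinInj := finInjDim_le_bigFinInjDim (A := A)
  have hPro : bigFinProDim A ≤ d' :=
    bigFinProDim_le_of_epi fun S hS => ⟨NS S, (hNS S hS).2.1, hNd S hS⟩
  have hInj : bigFinInjDim A ≤ d :=
    bigFinInjDim_le_of_mono fun S hS => ⟨MS S, (hMS S hS).2.1, hMd S hS⟩
  have hle_del := bigFinInjDim_le_delAlg (A := A)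
  have hle_des := bigFinProDim_le_desAlg (A := A)
  have hdel : delAlg A ≤ d :=
    delAlg_le_of_mono fun S hS => ⟨MS S, (hMS S hS).1, (hMS S hS).2.1, hMd S hS⟩
  have hdes : desAlg A ≤ d' :=
    desAlg_le_of_epi hI fun S hS => ⟨NS S, (hNS S hS).1, (hNS S hS).2.1, hNd S hS⟩
  and_intros <;> order

open ArtinAlg in
/-- Let `A` be an artin algebra. Assume every simple module `S` is a
submodule of a finitely generated module `M_S` of finite projective dimension and a
factor module of a finitely generated module `N_S` of finite injective dimension. Let
`d = max_S pd M_S` and `d' = max_S id N_S`. Then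
`fin-pro A = fin-inj A = Fin-pro A = Fin-inj A = del A = des A = d = d'`. -/
theorem statement_4 (R : Type) [CommRing R] [IsArtinianRing R]
    (A : Type) [Ring A] [Algebra R A] [Module.Finite R A]
    (MS NS : ModuleCat.{0} A → ModuleCat.{0} A)
    (hMS : ∀ S : ModuleCat.{0} A, IsSimpleModule A ↥S →
      Module.Finite A ↥(MS S) ∧ (∃ f : S ⟶ MS S, CategoryTheory.Mono f) ∧
        projDim A (MS S) ≠ ⊤)
    (hNS : ∀ S : ModuleCat.{0} A, IsSimpleModule A ↥S →
      Module.Finite A ↥(NS S) ∧ (∃ f : NS S ⟶ S, CategoryTheory.Epi f) ∧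
        injDim A (NS S) ≠ ⊤)
    (d d' : ℕ∞)
    (hd : d = sSup {x : ℕ∞ |
      ∃ S : ModuleCat.{0} A, IsSimpleModule A ↥S ∧ x = projDim A (MS S)})
    (hd' : d' = sSup {x : ℕ∞ |
      ∃ S : ModuleCat.{0} A, IsSimpleModule A ↥S ∧ x = injDim A (NS S)}) :
    finProDim A = finInjDim A ∧ finInjDim A = bigFinProDim A ∧
      bigFinProDim A = bigFinInjDim A ∧ bigFinInjDim A = delAlg A ∧
      delAlg A = desAlg A ∧ desAlg A = d ∧ d = d' := by
  have := IsArtinianRing.of_finite R A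
  exact statement_4_general A (fun S _ => exists_finite_injective_mono R S) MS NS hMS hNS d d' hd
    hd'
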